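/- arXiv:2309.15282 — 2 statements merged into one kernel-verified Lean document; each statement's English description precedes it below -/
import Mathlib

section
/- Let d ≥ 1. There exists a constant C > 0, depending only on d, such that for every λ > 0 and every χ ∈ L¹(ℝ^d), the operator with symbol b(x,ξ) = χ((x+ξ)/λ) · 1_{|x| > |ξ|} satisfies ‖Op(b) f‖_{L²(ℝ^d)} ≤ C λ^d ‖χ‖_{L¹(ℝ^d)} ‖f‖_{L²(ℝ^d)} for every Schwartz function f on ℝ^d. -/
open MeasureTheory Filter Topology
open scoped RealInnerProductSpace ENNReal

noncomputable section

abbrev Euc (d : ℕ) := EuclideanSpace ℝ (Fin d)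

/-- Fourier transform `f̂(ξ) = ∫ e^{-i x·ξ} f(x) dx`. -/
def FT {d : ℕ} (f : Euc d → ℂ) (ξ : Euc d) : ℂ :=
  ∫ x : Euc d, Complex.exp (-(Complex.I * ((⟪x, ξ⟫ : ℝ) : ℂ))) * f x

/-- The pseudo-differential operator `Op(a)` on a Schwartz function:
`Op(a)f(x) = (2π)^{-d} ∫ e^{i x·ξ} a(x,ξ) f̂(ξ) dξ`. -/
def OpS {d : ℕ} (a : Euc d → Euc d → ℂ) (f : Euc d → ℂ) (x : Euc d) : ℂ :=
  (((2 * Real.pi) ^ d : ℝ) : ℂ)⁻¹ *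
    ∫ ξ : Euc d, Complex.exp (Complex.I * ((⟪x, ξ⟫ : ℝ) : ℂ)) * a x ξ * FT f ξ

/-!
The symbol is dominated by `|χ((x + ξ) / λ)|`, a kernel whose integrals in `x` and in `ξ` both equal
`λ ^ d * ‖χ‖₁`. The oscillating factor has modulus one, so Schur's test bounds the map
`f̂ ↦ Op(a) f` on `L²` by `(2π) ^ (-d) * λ ^ d * ‖χ‖₁`. Plancherel's theorem contributes the factor
`(2π) ^ (d / 2)`.
-/

section SchurTest

variable {α β : Type*} [MeasurableSpace α] [MeasurableSpace β] {μ : Measure α} {ν : Measure β}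

theorem rpow_lintegral_mul_le {w g : α → ℝ≥0∞} (hw : AEMeasurable w μ) (hg : AEMeasurable g μ)
    {p : ℝ} (hp : 1 ≤ p) :
    (∫⁻ a, w a * g a ∂μ) ^ p ≤ (∫⁻ a, w a ∂μ) ^ (p - 1) * ∫⁻ a, w a * g a ^ p ∂μ := by
  have hp0 : p ≠ 0 := by positivity
  have hp' : 0 ≤ 1 - p⁻¹ := sub_nonneg.2 (inv_le_one_of_one_le₀ hp)
  have hpinv : 0 ≤ p⁻¹ := by positivity
  have split_weight (a : α) : w a ^ (1 - p⁻¹) * (w a * g a ^ p) ^ p⁻¹ = w a * g a := by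
    rw [ENNReal.mul_rpow_of_nonneg _ _ hpinv, ENNReal.rpow_rpow_inv hp0, ← mul_assoc,
      ← ENNReal.rpow_add_of_nonneg _ _ hp' hpinv, sub_add_cancel, ENNReal.rpow_one]
  have hoelder := ENNReal.lintegral_mul_norm_pow_le hw (hw.mul (hg.pow_const p)) hp' hpinv
    (sub_add_cancel 1 p⁻¹)
  simp only [Pi.mul_apply, split_weight] at hoelder
  calc (∫⁻ a, w a * g a ∂μ) ^ p
      ≤ ((∫⁻ a, w a ∂μ) ^ (1 - p⁻¹) * (∫⁻ a, w a * g a ^ p ∂μ) ^ p⁻¹) ^ p := by gcongr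
    _ = (∫⁻ a, w a ∂μ) ^ (p - 1) * ∫⁻ a, w a * g a ^ p ∂μ := by
      rw [ENNReal.mul_rpow_of_nonneg _ _ (by positivity), ENNReal.rpow_inv_rpow hp0,
        ← ENNReal.rpow_mul, sub_mul, one_mul, inv_mul_cancel₀ hp0]

theorem lintegral_schur_test [SFinite μ] [SFinite ν] {K : α → β → ℝ≥0∞}
    {g : β → ℝ≥0∞} (hK : AEMeasurable K.uncurry (μ.prod ν)) (hg : AEMeasurable g ν) {A B : ℝ≥0∞}
    (hA : ∀ᵐ x ∂μ, ∫⁻ y, K x y ∂ν ≤ A) (hB : ∀ᵐ y ∂ν, ∫⁻ x, K x y ∂μ ≤ B)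
    {p : ℝ} (hp : 1 ≤ p) :
    ∫⁻ x, (∫⁻ y, K x y * g y ∂ν) ^ p ∂μ ≤ A ^ (p - 1) * B * ∫⁻ y, g y ^ p ∂ν := by
  have hKg : AEMeasurable (fun z : α × β => K z.1 z.2 * g z.2 ^ p) (μ.prod ν) :=
    hK.mul (hg.comp_snd.pow_const p)
  have hKx : ∀ᵐ x ∂μ, AEMeasurable (K x) ν :=
    hK.aestronglyMeasurable.prodMk_left.mono fun _ h => h.aemeasurable
  have hKy : ∀ᵐ y ∂ν, AEMeasurable (fun x => K x y) μ :=
    hK.aestronglyMeasurable.prodMk_right.mono fun _ h => h.aemeasurable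
  calc ∫⁻ x, (∫⁻ y, K x y * g y ∂ν) ^ p ∂μ
      ≤ ∫⁻ x, A ^ (p - 1) * ∫⁻ y, K x y * g y ^ p ∂ν ∂μ := by
        refine lintegral_mono_ae ?_
        filter_upwards [hA, hKx] with x hAx hKx
        refine (rpow_lintegral_mul_le hKx hg hp).trans ?_
        gcongr
    _ = A ^ (p - 1) * ∫⁻ y, (∫⁻ x, K x y ∂μ) * g y ^ p ∂ν := by
        rw [lintegral_const_mul'' _ hKg.lintegral_prod_right', lintegral_lintegral_swap hKg]
        congr 1
        refine lintegral_congr_ae ?_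
        filter_upwards [hKy] with y hKy
        exact lintegral_mul_const'' _ hKy
    _ ≤ A ^ (p - 1) * ∫⁻ y, B * g y ^ p ∂ν := by
        gcongr 1
        refine lintegral_mono_ae ?_
        filter_upwards [hB] with y hBy
        gcongr
    _ = A ^ (p - 1) * B * ∫⁻ y, g y ^ p ∂ν := by
        rw [lintegral_const_mul'' _ (hg.pow_const p), mul_assoc]

theorem eLpNorm_schur_test [SFinite μ] [SFinite ν] {K : α → β → ℝ≥0∞}
    {g : β → ℝ≥0∞} (hK : AEMeasurable K.uncurry (μ.prod ν)) (hg : AEMeasurable g ν) {A : ℝ≥0∞}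
    (hA : ∀ᵐ x ∂μ, ∫⁻ y, K x y ∂ν ≤ A) (hB : ∀ᵐ y ∂ν, ∫⁻ x, K x y ∂μ ≤ A)
    {p : ℝ≥0∞} (hp : 1 ≤ p) (hp_top : p ≠ ∞) :
    eLpNorm (fun x => ∫⁻ y, K x y * g y ∂ν) p μ ≤ A * eLpNorm g p ν := by
  have hp0 : p ≠ 0 := (one_pos.trans_le hp).ne'
  have hp1 : 1 ≤ p.toReal := by simpa using ENNReal.toReal_mono hp_top hp
  have hA_pow : A ^ (p.toReal - 1) * A = A ^ p.toReal := by
    simpa only [ENNReal.rpow_one, sub_add_cancel] using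
      (ENNReal.rpow_add_of_nonneg (x := A) _ _ (sub_nonneg.2 hp1) zero_le_one).symm
  have schur := lintegral_schur_test hK hg hA hB hp1
  rw [hA_pow] at schur
  simp only [eLpNorm_eq_lintegral_rpow_enorm_toReal hp0 hp_top, enorm_eq_self, one_div]
  calc _ ≤ (A ^ p.toReal * ∫⁻ y, g y ^ p.toReal ∂ν) ^ p.toReal⁻¹ := by gcongr
    _ = _ := by
      rw [ENNReal.mul_rpow_of_nonneg _ _ (by positivity), ENNReal.rpow_rpow_inv (by positivity)]

theorem eLpNorm_lintegral_comp_add_mul_le {G : Type*} [AddCommGroup G] [MeasurableSpace G]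
    [MeasurableAdd₂ G] {μ : Measure G} [SFinite μ] [μ.IsAddLeftInvariant]
    {k g : G → ℝ≥0∞} (hk : AEMeasurable k μ) (hg : AEMeasurable g μ)
    {p : ℝ≥0∞} (hp : 1 ≤ p) (hp_top : p ≠ ∞) :
    eLpNorm (fun x => ∫⁻ y, k (x + y) * g y ∂μ) p μ ≤ (∫⁻ x, k x ∂μ) * eLpNorm g p μ :=
  eLpNorm_schur_test (K := fun x y => k (x + y))
    (hk.comp_quasiMeasurePreserving (quasiMeasurePreserving_add μ μ)) hg
    (.of_forall fun x => (lintegral_add_left_eq_self k x).le)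
    (.of_forall fun y => (lintegral_add_right_eq_self k y).le) hp hp_top

end SchurTest

section Scaling

variable {E : Type*} [NormedAddCommGroup E] [NormedSpace ℝ E] [FiniteDimensional ℝ E]
  [MeasurableSpace E] [BorelSpace E] (μ : Measure E) [μ.IsAddHaarMeasure]

theorem eLpNorm_comp_smul {F : Type*} [TopologicalSpace F] [ContinuousENorm F] (f : E → F)
    (p : ℝ≥0∞) {r : ℝ} (hr : r ≠ 0) :
    eLpNorm (fun x => f (r • x)) p μ =
      ENNReal.ofReal |(r ^ Module.finrank ℝ E)⁻¹| ^ (1 / p).toReal * eLpNorm f p μ := by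
  have hemb : MeasurableEmbedding (r • · : E → E) := measurableEmbedding_const_smul₀ hr
  have hc : ENNReal.ofReal |(r ^ Module.finrank ℝ E)⁻¹| ≠ 0 := by
    rw [ne_eq, ENNReal.ofReal_eq_zero, not_le]
    positivity
  rw [← smul_eq_mul, ← eLpNorm_smul_measure_of_ne_zero hc, ← Measure.map_addHaar_smul μ hr,
    hemb.eLpNorm_map_measure]
  rfl

theorem lintegral_comp_smul (f : E → ℝ≥0∞) {r : ℝ} (hr : r ≠ 0) :
    ∫⁻ x, f (r • x) ∂μ = ENNReal.ofReal |(r ^ Module.finrank ℝ E)⁻¹| * ∫⁻ x, f x ∂μ := by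
  simpa [eLpNorm_one_eq_lintegral_enorm] using eLpNorm_comp_smul μ f 1 hr

end Scaling

section Fourier

open scoped FourierTransform SchwartzMap

theorem eLpNorm_two_fourier {V H : Type*} [NormedAddCommGroup V] [InnerProductSpace ℝ V]
    [FiniteDimensional ℝ V] [MeasurableSpace V] [BorelSpace V] [NormedAddCommGroup H]
    [InnerProductSpace ℂ H] [CompleteSpace H] (f : 𝓢(V, H)) :
    eLpNorm (𝓕 (f : V → H)) 2 = eLpNorm f 2 := by
  have hf := (f.memLp 2).eLpNorm_ne_top
  have hFf := ((𝓕 f : 𝓢(V, H)).memLp 2).eLpNorm_ne_top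
  rw [← SchwartzMap.fourier_coe, ← ENNReal.toReal_eq_toReal_iff' hFf hf, ← SchwartzMap.norm_toLp,
    ← SchwartzMap.norm_toLp]
  exact SchwartzMap.norm_fourier_toL2_eq f

variable {d : ℕ}

theorem FT_eq_fourier (f : Euc d → ℂ) (ξ : Euc d) : FT f ξ = 𝓕 f ((2 * Real.pi)⁻¹ • ξ) := by
  rw [Real.fourier_eq', FT]
  congr! 4 with x
  rw [inner_smul_right]
  push_cast
  field_simp

theorem norm_FT_le (f : Euc d → ℂ) (ξ : Euc d) : ‖FT f ξ‖ ≤ ∫ x, ‖f x‖ := by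
  rw [FT_eq_fourier]
  exact VectorFourier.norm_fourierIntegral_le_integral_norm ..

theorem continuous_FT {f : Euc d → ℂ} (hf : Integrable f) : Continuous (FT f) := by
  rw [funext (FT_eq_fourier f)]
  have h : Continuous (𝓕 f) :=
    VectorFourier.fourierIntegral_continuous Real.continuous_fourierChar continuous_inner hf
  fun_prop

theorem eLpNorm_two_FT (f : 𝓢(Euc d, ℂ)) :
    eLpNorm (FT f) 2 = ENNReal.ofReal ((2 * Real.pi) ^ ((d : ℝ) / 2)) * eLpNorm f 2 := by
  rw [funext (FT_eq_fourier f), eLpNorm_comp_smul _ _ _ (by positivity), eLpNorm_two_fourier]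
  congr 1
  rw [ENNReal.ofReal_rpow_of_nonneg (by positivity) (by positivity)]
  congr 1
  rw [inv_pow, inv_inv, abs_of_pos (by positivity), ← Real.rpow_natCast,
    ← Real.rpow_mul (by positivity)]
  simp [div_eq_mul_inv]

theorem enorm_OpS_le (a : Euc d → Euc d → ℂ) (f : Euc d → ℂ) (x : Euc d) :
    ‖OpS a f x‖ₑ ≤
      ENNReal.ofReal ((2 * Real.pi) ^ (-d : ℝ)) * ∫⁻ ξ, ‖a x ξ‖ₑ * ‖FT f ξ‖ₑ := by
  have enorm_const : ‖(((2 * Real.pi) ^ d : ℝ) : ℂ)⁻¹‖ₑ =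
      ENNReal.ofReal ((2 * Real.pi) ^ (-d : ℝ)) := by
    rw [← ofReal_norm, norm_inv, Complex.norm_real, Real.norm_of_nonneg (by positivity),
      Real.rpow_neg (by positivity), Real.rpow_natCast]
  rw [OpS, enorm_mul, enorm_const]
  gcongr
  refine (enorm_integral_le_lintegral_enorm _).trans_eq (lintegral_congr fun ξ => ?_)
  rw [enorm_mul, enorm_mul, mul_comm Complex.I, ← ofReal_norm, Complex.norm_exp_ofReal_mul_I,
    ENNReal.ofReal_one, one_mul]

theorem eLpNorm_OpS_le {a : Euc d → Euc d → ℂ} {k : Euc d → ℝ≥0∞} (hk : AEMeasurable k)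
    (hak : ∀ x ξ, ‖a x ξ‖ₑ ≤ k (x + ξ)) (f : 𝓢(Euc d, ℂ)) :
    eLpNorm (OpS a f) 2 ≤
      ENNReal.ofReal ((2 * Real.pi) ^ (-(d : ℝ) / 2)) * (∫⁻ x, k x) * eLpNorm f 2 := by
  have hFT : AEMeasurable (fun ξ => ‖FT f ξ‖ₑ) := (continuous_FT f.integrable).enorm.aemeasurable
  have pointwise (x : Euc d) : ‖OpS a f x‖ₑ ≤
      ENNReal.ofReal ((2 * Real.pi) ^ (-d : ℝ)) * ‖∫⁻ ξ, k (x + ξ) * ‖FT f ξ‖ₑ‖ₑ := by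
    refine (enorm_OpS_le a f x).trans ?_
    rw [enorm_eq_self]
    gcongr
    exact hak x _
  calc eLpNorm (OpS a f) 2 volume
      ≤ ENNReal.ofReal ((2 * Real.pi) ^ (-d : ℝ)) *
          eLpNorm (fun x => ∫⁻ ξ, k (x + ξ) * ‖FT f ξ‖ₑ) 2 volume :=
        eLpNorm_le_mul_eLpNorm_of_ae_le_mul' (.of_forall pointwise) 2
    _ ≤ ENNReal.ofReal ((2 * Real.pi) ^ (-d : ℝ)) * ((∫⁻ x, k x) * eLpNorm (FT f) 2 volume) := by
        gcongr
        rw [← eLpNorm_enorm (FT f)]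
        exact eLpNorm_lintegral_comp_add_mul_le hk hFT one_le_two ENNReal.ofNat_ne_top
    _ = ENNReal.ofReal ((2 * Real.pi) ^ (-d : ℝ)) *
          ENNReal.ofReal ((2 * Real.pi) ^ ((d : ℝ) / 2)) * (∫⁻ x, k x) * eLpNorm f 2 volume := by
        rw [eLpNorm_two_FT]
        ring
    _ = ENNReal.ofReal ((2 * Real.pi) ^ (-(d : ℝ) / 2)) * (∫⁻ x, k x) * eLpNorm f 2 volume := by
        rw [← ENNReal.ofReal_mul (by positivity), ← Real.rpow_add (by positivity)]
        congr 4
        ring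

end Fourier

theorem statement17_general {d : ℕ} {lam : ℝ} (hlam : lam ≠ 0) {χ : Euc d → ℂ}
    (hχ : Integrable χ) {m : Euc d → Euc d → ℂ} (hm : ∀ x, AEStronglyMeasurable (m x))
    (hm_le : ∀ x ξ, ‖m x ξ‖ ≤ 1) (f : SchwartzMap (Euc d) ℂ) :
    (∀ x, Integrable fun ξ => Complex.exp (Complex.I * ((⟪x, ξ⟫ : ℝ) : ℂ)) *
      (χ (lam⁻¹ • (x + ξ)) * m x ξ) * FT f ξ) ∧
    eLpNorm (OpS (fun x ξ => χ (lam⁻¹ • (x + ξ)) * m x ξ) f) 2 ≤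
      ENNReal.ofReal ((2 * Real.pi) ^ (-(d : ℝ) / 2) * |lam| ^ d * ∫ x, ‖χ x‖) *
        eLpNorm f 2 := by
  have hχ_scaled : Integrable fun y => χ (lam⁻¹ • y) := hχ.comp_smul (inv_ne_zero hlam)
  have hχ_lintegral : ∫⁻ y, ‖χ (lam⁻¹ • y)‖ₑ = ENNReal.ofReal (|lam| ^ d * ∫ x, ‖χ x‖) := by
    rw [lintegral_comp_smul volume (fun y => ‖χ y‖ₑ) (inv_ne_zero hlam),
      ← ofReal_integral_norm_eq_lintegral_enorm hχ, ← ENNReal.ofReal_mul (by positivity)]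
    simp
  refine ⟨fun x => ?_, ?_⟩
  · have hint : Integrable fun ξ => χ (lam⁻¹ • (x + ξ)) := hχ_scaled.comp_add_left x
    have hexp : Continuous fun ξ => Complex.exp (Complex.I * ((⟪x, ξ⟫ : ℝ) : ℂ)) := by fun_prop
    have hsymbol := hint.mul_bdd (hm x) (.of_forall (hm_le x))
    refine (hsymbol.bdd_mul (c := 1) hexp.aestronglyMeasurable (.of_forall fun ξ => ?_)).mul_bdd
      (continuous_FT f.integrable).aestronglyMeasurable (.of_forall (norm_FT_le f))
    rw [mul_comm, Complex.norm_exp_ofReal_mul_I]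
  · have hsymbol_le (x ξ : Euc d) : ‖χ (lam⁻¹ • (x + ξ)) * m x ξ‖ₑ ≤ ‖χ (lam⁻¹ • (x + ξ))‖ₑ := by
      rw [enorm_le_iff_norm_le, norm_mul]
      exact mul_le_of_le_one_right (norm_nonneg _) (hm_le x ξ)
    rw [mul_assoc, ENNReal.ofReal_mul (by positivity), ← hχ_lintegral]
    exact eLpNorm_OpS_le hχ_scaled.aestronglyMeasurable.enorm hsymbol_le f

/-- Proposition C.2: uniform Schur-type bound: for every `λ > 0` and every
integrable `χ`, the operator with symbol `b(x,ξ) = χ((x+ξ)/λ) 1_{|x|>|ξ|}` is bounded on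
`L²` with norm at most `C λ^d ‖χ‖_{L¹}`. -/
theorem statement17 (d : ℕ) (hd : 1 ≤ d) :
    ∃ C : ℝ, 0 < C ∧
      ∀ lam : ℝ, 0 < lam → ∀ χ : Euc d → ℂ, Integrable χ (volume : Measure (Euc d)) →
        ∀ f : SchwartzMap (Euc d) ℂ,
          eLpNorm
            (OpS (fun x ξ =>
              χ (lam⁻¹ • (x + ξ)) * (if ‖ξ‖ < ‖x‖ then (1:ℂ) else 0)) ⇑f) 2
            (volume : Measure (Euc d))
          ≤ ENNReal.ofReal (C * lam ^ d * ∫ x : Euc d, ‖χ x‖) *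
              eLpNorm (⇑f) 2 (volume : Measure (Euc d)) := by
  refine ⟨(2 * Real.pi) ^ (-(d : ℝ) / 2), by positivity, fun lam hlam χ hχ f => ?_⟩
  have hm (x : Euc d) : AEStronglyMeasurable fun ξ : Euc d => if ‖ξ‖ < ‖x‖ then (1 : ℂ) else 0 :=
    (measurable_const.ite (measurableSet_lt measurable_norm measurable_const)
      measurable_const).aestronglyMeasurable
  have hm_le (x ξ : Euc d) : ‖if ‖ξ‖ < ‖x‖ then (1 : ℂ) else 0‖ ≤ 1 := by split_ifs <;> simp
  simpa only [abs_of_pos hlam] using (statement17_general hlam.ne' hχ hm hm_le f).2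
end
end

section
/- Let d ≥ 1, let w₀ ∈ H¹(ℝ^d) and w₁ ∈ L²(ℝ^d) be real-valued, and let w be the solution of the Klein–Gordon equation ∂_t²w − Δw + w = 0 with w(0) = w₀ and ∂_t w(0) = w₁. Then for all r₀, r₁ with 0 ≤ r₀ ≤ r₁ ≤ +∞, lim_{t→±∞} ∫_{{x ∈ ℝ^d : r₀ < |x|/|t| < r₁}} (|∂_t w(t,x)|² + |∇w(t,x)|² + |w(t,x)|²) dx = (2π)^{−d} ∫_{{ξ ∈ ℝ^d : r₀ < |ξ|/⟨ξ⟩ < r₁}} (⟨ξ⟩² |ŵ₀(ξ)|² + |ŵ₁(ξ)|²) dξ, where ⟨ξ⟩ = √(1+|ξ|²). In particular, taking r₀ = 1 and r₁ = +∞, the energy outside the light cone tends to zero: lim_{t→±∞} ∫_{|x| > |t|} (|∂_t w|² + |∇w|² + |w|²) dx = 0. -/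
open MeasureTheory Filter Topology
open scoped RealInnerProductSpace ENNReal

noncomputable section

/-- `v` is the (distributional) Fourier transform of `u`. -/
def IsFourierTransformOf {d : ℕ} (u v : Euc d → ℂ) : Prop :=
  ∀ g : SchwartzMap (Euc d) ℂ, ∫ ξ : Euc d, v ξ * g ξ = ∫ x : Euc d, u x * FT (⇑g) x

/-- The japanese bracket `⟨ξ⟩ = √(1+|ξ|²)`. -/
def jap {d : ℕ} (ξ : Euc d) : ℝ := Real.sqrt (1 + ‖ξ‖ ^ 2)

/-- Fourier transform of the Klein–Gordon solution `w(t)`: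
`ŵ(t,ξ) = cos(t⟨ξ⟩) ŵ₀(ξ) + (sin(t⟨ξ⟩)/⟨ξ⟩) ŵ₁(ξ)`. -/
def vW {d : ℕ} (v₀ v₁ : Euc d → ℂ) (t : ℝ) (ξ : Euc d) : ℂ :=
  ((Real.cos (t * jap ξ) : ℝ) : ℂ) * v₀ ξ + ((Real.sin (t * jap ξ) / jap ξ : ℝ) : ℂ) * v₁ ξ

/-- Fourier transform of `∂_t w(t)`. -/
def vDt {d : ℕ} (v₀ v₁ : Euc d → ℂ) (t : ℝ) (ξ : Euc d) : ℂ :=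
  -(((jap ξ * Real.sin (t * jap ξ) : ℝ) : ℂ)) * v₀ ξ + ((Real.cos (t * jap ξ) : ℝ) : ℂ) * v₁ ξ

/-- The local Klein–Gordon energy of the solution at time `t` over the annulus
`{r₀ < |x|/|t| < r₁}` (with `r₀, r₁ ∈ [0,∞]`). -/
def localEnergy {d : ℕ} (wfun dtw : ℝ → Euc d → ℂ) (djw : ℝ → Fin d → Euc d → ℂ)
    (r₀ r₁ : ℝ≥0∞) (t : ℝ) : ℝ :=
  ∫ x in {x : Euc d | r₀ < ENNReal.ofReal (‖x‖ / |t|) ∧ ENNReal.ofReal (‖x‖ / |t|) < r₁},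
    (‖dtw t x‖ ^ 2 + (∑ j : Fin d, ‖djw t j x‖ ^ 2) + ‖wfun t x‖ ^ 2)

/-!
On the Fourier side the energy vector `(∇w, w, ∂ₜw)` is a sum of two waves `e^{-itφ(ξ)} A(ξ)` with
phases `φ = ±⟨ξ⟩` and pointwise orthogonal amplitudes. The characteristic function at `a` of the
energy density in the variable `x / t` is, by Plancherel, the correlation of this superposition with
its translate by `a / t`. Since `t (φ(ξ) - φ(ξ - a / t)) → ⟪a, ∇φ(ξ)⟫`, and translation is
continuous in `L²`, it converges to the characteristic function of the push-forward of
`|A₊|² + |A₋|²` by the group velocities `∇φ`; the cross terms vanish by orthogonality. By Lévy's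
continuity theorem the rescaled energy density converges weakly, and an annulus can be tested
because the level sets of `|∇φ(ξ)| = |ξ| / ⟨ξ⟩` are Lebesgue null. Outside the light cone the
limit vanishes because `|ξ| < ⟨ξ⟩`.
-/

open Bornology
open scoped NNReal FourierTransform InnerProductSpace Gradient

section WeakConvergence

lemma tendsto_finiteMeasure_of_null_frontier {Ω ι : Type*} [TopologicalSpace Ω]
    [HasOuterApproxClosed Ω] [MeasurableSpace Ω] [BorelSpace Ω] {l : Filter ι}
    {μ : ι → FiniteMeasure Ω} {ν : FiniteMeasure Ω} (h : Tendsto μ l (𝓝 ν)) {S : Set Ω}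
    (hS : ν (frontier S) = 0) :
    Tendsto (fun i => μ i S) l (𝓝 (ν S)) := by
  rcases eq_or_ne ν 0 with rfl | hν
  · have h_mass : Tendsto (fun i => (μ i).mass) l (𝓝 0) := by simpa using h.mass
    simpa using tendsto_of_tendsto_of_tendsto_of_le_of_le tendsto_const_nhds h_mass
      (fun i => zero_le) fun i => (μ i).apply_le_mass S
  have : Nonempty Ω := not_isEmpty_iff.mp fun _ =>
    hν (Subtype.ext (Measure.eq_zero_of_isEmpty (ν : Measure Ω)))
  have hS_normalize : ν.normalize (frontier S) = 0 := by
    rw [ν.normalize_eq_of_nonzero hν, hS, mul_zero]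
  simpa only [FiniteMeasure.self_eq_mass_mul_normalize] using
    h.mass.mul (ProbabilityMeasure.tendsto_measure_of_null_frontier_of_tendsto
      (FiniteMeasure.tendsto_normalize_of_tendsto h hν) hS_normalize)

variable {E : Type*} [NormedAddCommGroup E] [InnerProductSpace ℝ E] [MeasurableSpace E]

lemma charFun_nnreal_smul (c : ℝ≥0) (μ : Measure E) (a : E) :
    charFun (c • μ) a = ((c : ℝ) : ℂ) * charFun μ a := by
  rw [charFun_apply, charFun_apply, integral_smul_nnreal_measure, NNReal.smul_def,
    Complex.real_smul]

lemma charFun_normalize {μ : FiniteMeasure E} (hμ : μ ≠ 0) (a : E) :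
    charFun (μ.normalize : Measure E) a = ((μ.mass : ℝ) : ℂ)⁻¹ * charFun (μ : Measure E) a := by
  rw [FiniteMeasure.toMeasure_normalize_eq_of_nonzero μ hμ, charFun_nnreal_smul, NNReal.coe_inv,
    Complex.ofReal_inv]

variable [FiniteDimensional ℝ E] [BorelSpace E]

theorem tendsto_finiteMeasure_of_tendsto_charFun {μ : ℕ → FiniteMeasure E} {ν : FiniteMeasure E}
    (h : ∀ a, Tendsto (fun n => charFun (μ n : Measure E) a) atTop
      (𝓝 (charFun (ν : Measure E) a))) :
    Tendsto μ atTop (𝓝 ν) := by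
  have h_mass : Tendsto (fun n => (μ n).mass) atTop (𝓝 ν.mass) := by
    have h₀ := h 0
    simp only [charFun_zero] at h₀
    exact NNReal.tendsto_coe.mp ((Complex.continuous_re.tendsto _).comp h₀)
  rcases eq_or_ne ν 0 with rfl | hν
  · exact FiniteMeasure.tendsto_zero_of_tendsto_zero_mass (by simpa using h_mass)
  have hν_mass : ν.mass ≠ 0 := ν.mass_nonzero_iff.mpr hν
  have h_inv : Tendsto (fun n => (((μ n).mass : ℝ) : ℂ)⁻¹) atTop (𝓝 ((ν.mass : ℝ) : ℂ)⁻¹) :=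
    ((Complex.continuous_ofReal.tendsto _).comp (NNReal.tendsto_coe.mpr h_mass)).inv₀
      (by exact_mod_cast hν_mass)
  refine FiniteMeasure.tendsto_of_tendsto_normalize_testAgainstNN_of_tendsto_mass
    (ProbabilityMeasure.tendsto_of_tendsto_charFun fun a => ?_) h_mass
  rw [charFun_normalize hν]
  refine (h_inv.mul (h a)).congr' ?_
  filter_upwards [h_mass.eventually_ne hν_mass] with n hn
  rw [charFun_normalize ((μ n).mass_nonzero_iff.mp hn)]

theorem tendsto_measureReal_of_tendsto_charFun {ι : Type*} {l : Filter ι}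
    [l.IsCountablyGenerated] {μ : ι → Measure E} {ν : Measure E} [∀ i, IsFiniteMeasure (μ i)]
    [IsFiniteMeasure ν] (h : ∀ a, Tendsto (fun i => charFun (μ i) a) l (𝓝 (charFun ν a)))
    {S : Set E} (hS : ν (frontier S) = 0) :
    Tendsto (fun i => (μ i).real S) l (𝓝 (ν.real S)) := by
  refine tendsto_of_seq_tendsto fun i hi => ?_
  let M : ℕ → FiniteMeasure E := fun n => ⟨μ (i n), inferInstance⟩
  let N : FiniteMeasure E := ⟨ν, inferInstance⟩
  have hN : N (frontier S) = 0 := by simp [N, hS]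
  have hMN : Tendsto M atTop (𝓝 N) :=
    tendsto_finiteMeasure_of_tendsto_charFun fun a => (h a).comp hi
  exact NNReal.tendsto_coe.mpr (tendsto_finiteMeasure_of_null_frontier hMN hN)

end WeakConvergence

section InnerL2

variable {α F : Type*} [MeasurableSpace α] {μ : Measure α} [NormedAddCommGroup F]
  [InnerProductSpace ℂ F] {f g : α → F}

lemma inner_toLp_toLp (hf : MemLp f 2 μ) (hg : MemLp g 2 μ) :
    ⟪hf.toLp f, hg.toLp g⟫_ℂ = ∫ x, ⟪f x, g x⟫_ℂ ∂μ := by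
  rw [L2.inner_def]
  refine integral_congr_ae ?_
  filter_upwards [hf.coeFn_toLp, hg.coeFn_toLp] with x hfx hgx
  rw [hfx, hgx]

lemma integrable_inner_of_memLp (hf : MemLp f 2 μ) (hg : MemLp g 2 μ) :
    Integrable (fun x => ⟪f x, g x⟫_ℂ) μ := by
  refine (L2.integrable_inner (𝕜 := ℂ) (hf.toLp f) (hg.toLp g)).congr ?_
  filter_upwards [hf.coeFn_toLp, hg.coeFn_toLp] with x hfx hgx
  rw [hfx, hgx]

lemma norm_integral_inner_le (hf : MemLp f 2 μ) (hg : MemLp g 2 μ) :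
    ‖∫ x, ⟪f x, g x⟫_ℂ ∂μ‖ ≤ (eLpNorm f 2 μ).toReal * (eLpNorm g 2 μ).toReal := by
  rw [← inner_toLp_toLp hf hg, ← Lp.norm_toLp f hf, ← Lp.norm_toLp g hg]
  exact norm_inner_le_norm _ _

lemma tendsto_integral_inner_sub_zero {ι : Type*} {l : Filter ι} {f g h : ι → α → F} {C : ℝ}
    (hf : ∀ i, MemLp (f i) 2 μ) (hg : ∀ i, MemLp (g i) 2 μ) (hh : ∀ i, MemLp (h i) 2 μ)
    (hC : ∀ i, (eLpNorm (f i) 2 μ).toReal ≤ C)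
    (hgh : Tendsto (fun i => eLpNorm (g i - h i) 2 μ) l (𝓝 0)) :
    Tendsto (fun i => ∫ x, ⟪f i x, g i x⟫_ℂ ∂μ - ∫ x, ⟪f i x, h i x⟫_ℂ ∂μ) l (𝓝 0) := by
  have h_bound : Tendsto (fun i => C * (eLpNorm (g i - h i) 2 μ).toReal) l (𝓝 0) := by
    simpa using ((ENNReal.tendsto_toReal ENNReal.zero_ne_top).comp hgh).const_mul C
  refine squeeze_zero_norm (fun i => ?_) h_bound
  rw [← integral_sub (integrable_inner_of_memLp (hf i) (hg i))
    (integrable_inner_of_memLp (hf i) (hh i))]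
  simp only [← inner_sub_right]
  exact (norm_integral_inner_le (hf i) ((hg i).sub (hh i))).trans
    (mul_le_mul_of_nonneg_right (hC i) ENNReal.toReal_nonneg)

end InnerL2

lemma tendsto_eLpNorm_zero_of_dominated {α ι F : Type*} [MeasurableSpace α] {μ : Measure α}
    [NormedAddCommGroup F] {l : Filter ι} [l.IsCountablyGenerated] {p : ℝ≥0∞} (hp : p ≠ ∞)
    {f : ι → α → F} {g : α → ℝ} (hf : ∀ i, AEStronglyMeasurable (f i) μ) (hg : MemLp g p μ)
    (h_le : ∀ i x, ‖f i x‖ ≤ g x) (h_lim : ∀ x, Tendsto (fun i => f i x) l (𝓝 0)) :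
    Tendsto (fun i => eLpNorm (f i) p μ) l (𝓝 0) := by
  rcases eq_or_ne p 0 with rfl | hp₀
  · simpa using tendsto_const_nhds
  have hp_pos : 0 < p.toReal := ENNReal.toReal_pos hp₀ hp
  have h_lintegral :
      Tendsto (fun i => ∫⁻ x, ‖f i x‖ₑ ^ p.toReal ∂μ) l (𝓝 (∫⁻ _, 0 ∂μ)) := by
    refine tendsto_lintegral_filter_of_dominated_convergence' (fun x => ‖g x‖ₑ ^ p.toReal)
      (.of_forall fun i => (hf i).enorm.pow_const _) (.of_forall fun i => .of_forall fun x => ?_)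
      (lintegral_rpow_enorm_lt_top_of_eLpNorm_lt_top hp₀ hp hg.2).ne (.of_forall fun x => ?_)
    · gcongr
      exact enorm_le_iff_norm_le.mpr ((h_le i x).trans (le_abs_self _))
    · simpa [hp_pos] using ((h_lim x).enorm.ennrpow_const p.toReal)
  rw [lintegral_zero] at h_lintegral
  simp only [eLpNorm_eq_lintegral_rpow_enorm_toReal hp₀ hp]
  simpa [hp_pos] using h_lintegral.ennrpow_const (1 / p.toReal)

section Translation

variable {E F : Type*} [NormedAddCommGroup E] [MeasurableSpace E] [BorelSpace E]
  [NormedAddCommGroup F] {μ : Measure E} {p : ℝ≥0∞} {f : E → F}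

lemma memLp_comp_sub [μ.IsAddRightInvariant] (hf : MemLp f p μ) (b : E) :
    MemLp (fun x => f (x - b)) p μ :=
  hf.comp_measurePreserving (measurePreserving_sub_right μ b)

variable [NormedSpace ℝ E] [FiniteDimensional ℝ E] [μ.IsAddHaarMeasure]

lemma memLp_comp_smul (hf : MemLp f p μ) {c : ℝ} (hc : c ≠ 0) :
    MemLp (fun x => f (c • x)) p μ := by
  refine MemLp.comp_of_map (f := fun x => c • x) ?_ (by fun_prop)
  rw [Measure.map_addHaar_smul μ hc]
  exact hf.smul_measure ENNReal.ofReal_ne_top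

theorem tendsto_eLpNorm_comp_sub_sub_zero [Fact (1 ≤ p)] (hp : p ≠ ∞) (hf : MemLp f p μ) :
    Tendsto (fun b => eLpNorm ((fun x => f (x - b)) - f) p μ) (𝓝 0) (𝓝 0) := by
  have : Fact (p ≠ ∞) := ⟨hp⟩
  have h_vadd : ∀ b, (memLp_comp_sub hf b).toLp _ = DomAddAct.mk (-b) +ᵥ hf.toLp f := by
    intro b
    rw [DomAddAct.mk_vadd_toLp]
    congr 1 with x
    rw [vadd_eq_add, sub_eq_neg_add]
  have h_cont : Continuous fun b : E => DomAddAct.mk (-b) +ᵥ hf.toLp f :=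
    (DomAddAct.continuous_mk.comp continuous_neg).vadd continuous_const
  refine (Lp.tendsto_Lp_iff_tendsto_eLpNorm'' _ (memLp_comp_sub hf) f hf).mp ?_
  simpa [h_vadd] using h_cont.tendsto 0

end Translation

section FourierTransform

variable {d : ℕ}

lemma FT_comp_add_right (g : Euc d → ℂ) (b x : Euc d) :
    FT (fun ξ => g (ξ + b)) x = Complex.exp (⟪x, b⟫ * Complex.I) * FT g x := by
  unfold FT
  rw [← integral_const_mul, ← integral_add_right_eq_self _ (-b)]
  refine integral_congr_ae (.of_forall fun y => ?_)
  dsimp only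
  rw [neg_add_cancel_right, ← mul_assoc, ← Complex.exp_add, inner_add_left, inner_neg_left,
    real_inner_comm x b]
  push_cast
  ring_nf

lemma FT_comp_inv_two_pi_smul (g : Euc d → ℂ) (x : Euc d) :
    FT (fun y => g ((2 * Real.pi)⁻¹ • y)) x = (2 * Real.pi) ^ d * 𝓕 g x := by
  have h_pi : 2 * Real.pi ≠ 0 := by positivity
  have h_scale := Measure.integral_comp_smul (volume : Measure (Euc d))
    (fun y => Complex.exp (-(Complex.I * ⟪y, x⟫)) * g ((2 * Real.pi)⁻¹ • y)) (2 * Real.pi)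
  rw [finrank_euclideanSpace_fin, abs_of_pos (by positivity),
    eq_inv_smul_iff₀ (pow_ne_zero d h_pi)] at h_scale
  rw [Real.fourier_eq, FT, ← h_scale, Complex.real_smul]
  push_cast
  congr 2 with y
  rw [smul_smul, inv_mul_cancel₀ h_pi, one_smul, Circle.smul_def, Real.fourierChar_apply,
    smul_eq_mul, real_inner_smul_left]
  push_cast
  ring_nf

namespace IsFourierTransformOf

variable {u v u' v' : Euc d → ℂ}

theorem modulate (h : IsFourierTransformOf u v) (b : Euc d) :
    IsFourierTransformOf (fun x => Complex.exp (⟪x, b⟫ * Complex.I) * u x)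
      (fun ξ => v (ξ - b)) := by
  intro g
  have h_shift := h (g.compSubConstCLM ℂ (-b))
  have h_coe : ⇑(g.compSubConstCLM ℂ (-b)) = fun ξ => g (ξ + b) := by
    ext ξ
    simp only [SchwartzMap.compSubConstCLM_apply, sub_neg_eq_add]
  rw [h_coe] at h_shift
  simp only [FT_comp_add_right] at h_shift
  calc ∫ ξ, v (ξ - b) * g ξ = ∫ ξ, v ξ * g (ξ + b) := by
        rw [← integral_add_right_eq_self _ b]
        simp only [add_sub_cancel_right]
    _ = _ := by simp only [h_shift, mul_left_comm, mul_assoc]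

lemma integral_comp_two_pi_smul_mul (h : IsFourierTransformOf u v) (g : SchwartzMap (Euc d) ℂ) :
    ∫ ξ, v ((2 * Real.pi) • ξ) * g ξ = ∫ x, u x * 𝓕 g x := by
  have h_pi : 2 * Real.pi ≠ 0 := Real.two_pi_pos.ne'
  have h_pi_complex : (2 * Real.pi : ℂ) ≠ 0 := by exact_mod_cast h_pi
  let dilation : Euc d ≃L[ℝ] Euc d :=
    ContinuousLinearEquiv.smulLeft (Units.mk0 (2 * Real.pi)⁻¹ (inv_ne_zero h_pi))
  have h_dilate : ∫ ξ, v ξ * g ((2 * Real.pi)⁻¹ • ξ)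
      = ∫ x, u x * FT (fun y => g ((2 * Real.pi)⁻¹ • y)) x :=
    h (SchwartzMap.compCLMOfContinuousLinearEquiv ℂ dilation g)
  have h_scale := Measure.integral_comp_smul (volume : Measure (Euc d))
    (fun ξ => v ξ * g ((2 * Real.pi)⁻¹ • ξ)) (2 * Real.pi)
  simp only [smul_smul, inv_mul_cancel₀ h_pi, one_smul] at h_scale
  simp only [FT_comp_inv_two_pi_smul, mul_left_comm _ ((2 * Real.pi : ℂ) ^ d),
    integral_const_mul] at h_dilate
  rw [h_scale, h_dilate, finrank_euclideanSpace_fin, abs_of_pos (by positivity),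
    Complex.real_smul, SchwartzMap.fourier_coe]
  push_cast
  exact inv_mul_cancel_left₀ (pow_ne_zero d h_pi_complex) _

lemma toLp_comp_two_pi_smul (hu : MemLp u 2) (hv : MemLp v 2) (h : IsFourierTransformOf u v) :
    (memLp_comp_smul hv Real.two_pi_pos.ne').toLp _ = 𝓕 (hu.toLp u) := by
  have hv' := memLp_comp_smul hv Real.two_pi_pos.ne'
  refine LinearMap.ker_eq_bot.mp (Lp.ker_toTemperedDistributionCLM_eq_bot (E := Euc d) (F := ℂ)
    (μ := volume) (p := 2)) ?_
  change Lp.toTemperedDistribution _ = Lp.toTemperedDistribution _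
  rw [← Lp.fourier_toTemperedDistribution_eq]
  ext g
  rw [TemperedDistribution.fourier_apply, Lp.toTemperedDistribution_apply,
    Lp.toTemperedDistribution_apply]
  calc ∫ ξ, g ξ • hv'.toLp _ ξ = ∫ ξ, v ((2 * Real.pi) • ξ) * g ξ := by
        refine integral_congr_ae ?_
        filter_upwards [hv'.coeFn_toLp] with ξ hξ
        rw [hξ, smul_eq_mul, mul_comm]
    _ = ∫ x, u x * 𝓕 g x := integral_comp_two_pi_smul_mul h g
    _ = ∫ x, 𝓕 g x • hu.toLp u x := by
        refine integral_congr_ae ?_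
        filter_upwards [hu.coeFn_toLp] with x hx
        rw [hx, smul_eq_mul, mul_comm]

theorem integral_inner (hu : MemLp u 2) (hv : MemLp v 2) (h : IsFourierTransformOf u v)
    (hu' : MemLp u' 2) (hv' : MemLp v' 2) (h' : IsFourierTransformOf u' v') :
    ∫ x, ⟪u x, u' x⟫_ℂ = ((2 * Real.pi) ^ d)⁻¹ * ∫ ξ, ⟪v ξ, v' ξ⟫_ℂ := by
  have h_isometry := Lp.inner_fourier_eq (hu.toLp u) (hu'.toLp u')
  rw [← toLp_comp_two_pi_smul hu hv h, ← toLp_comp_two_pi_smul hu' hv' h',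
    inner_toLp_toLp, inner_toLp_toLp] at h_isometry
  rw [← h_isometry, Measure.integral_comp_smul volume (fun ξ => ⟪v ξ, v' ξ⟫_ℂ) (2 * Real.pi),
    finrank_euclideanSpace_fin, abs_of_pos (by positivity), Complex.real_smul, Complex.ofReal_inv,
    Complex.ofReal_pow, Complex.ofReal_mul, Complex.ofReal_ofNat]

variable {ι : Type*} [Fintype ι] {U V U' V' : Euc d → EuclideanSpace ℂ ι}

theorem integral_inner_piLp (hU : MemLp U 2) (hV : MemLp V 2)
    (h : ∀ k, IsFourierTransformOf (fun x => U x k) (fun ξ => V ξ k))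
    (hU' : MemLp U' 2) (hV' : MemLp V' 2)
    (h' : ∀ k, IsFourierTransformOf (fun x => U' x k) (fun ξ => V' ξ k)) :
    ∫ x, ⟪U x, U' x⟫_ℂ = ((2 * Real.pi) ^ d)⁻¹ * ∫ ξ, ⟪V ξ, V' ξ⟫_ℂ := by
  simp only [PiLp.inner_apply]
  rw [integral_finsetSum _ fun k _ => integrable_inner_of_memLp (hU.eval_piLp k) (hU'.eval_piLp k),
    integral_finsetSum _ fun k _ => integrable_inner_of_memLp (hV.eval_piLp k) (hV'.eval_piLp k),
    Finset.mul_sum]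
  exact Finset.sum_congr rfl fun k _ => integral_inner (hU.eval_piLp k) (hV.eval_piLp k) (h k)
    (hU'.eval_piLp k) (hV'.eval_piLp k) (h' k)

/-- Modulation in space is translation in frequency, so Parseval's identity expresses the
characteristic function of the density `‖U‖²` as an autocorrelation of the Fourier transform. -/
theorem integral_exp_mul_norm_sq (hU : MemLp U 2) (hV : MemLp V 2)
    (h : ∀ k, IsFourierTransformOf (fun x => U x k) (fun ξ => V ξ k)) (b : Euc d) :
    ∫ x, Complex.exp (⟪x, b⟫ * Complex.I) * ‖U x‖ ^ 2
      = ((2 * Real.pi) ^ d)⁻¹ * ∫ ξ, ⟪V ξ, V (ξ - b)⟫_ℂ := by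
  let U' : Euc d → EuclideanSpace ℂ ι := fun x => Complex.exp (⟪x, b⟫ * Complex.I) • U x
  have h_exp : Continuous fun x : Euc d => Complex.exp (⟪x, b⟫ * Complex.I) := by fun_prop
  have hU' : MemLp U' 2 := hU.of_le (h_exp.aestronglyMeasurable.smul hU.1)
    (.of_forall fun x => by rw [norm_smul, Complex.norm_exp_ofReal_mul_I, one_mul])
  have hV' : MemLp (fun ξ => V (ξ - b)) 2 := memLp_comp_sub hV b
  rw [← integral_inner_piLp hU hV h hU' hV' fun k => (h k).modulate b]
  simp only [U', inner_smul_right, inner_self_eq_norm_sq_to_K, Complex.coe_algebraMap]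

end IsFourierTransformOf

end FourierTransform

instance isCountablyGenerated_cobounded (E : Type*) [SeminormedAddCommGroup E] :
    (cobounded E).IsCountablyGenerated := by
  rw [← comap_norm_atTop]
  infer_instance

lemma tendsto_inv_smul_cobounded {E : Type*} [NormedAddCommGroup E] [NormedSpace ℝ E] (a : E) :
    Tendsto (fun t : ℝ => t⁻¹ • a) (cobounded ℝ) (𝓝 0) := by
  have h_inv : Tendsto (·⁻¹) (cobounded ℝ) (𝓝 0) := tendsto_inv₀_cobounded
  simpa only [zero_smul] using h_inv.smul_const a

lemma memLp_circleExp_smul {α F : Type*} [MeasurableSpace α] {μ : Measure α}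
    [NormedAddCommGroup F] [NormedSpace ℂ F] {p : ℝ≥0∞} {A : α → F} {θ : α → ℝ}
    (hθ : AEStronglyMeasurable θ μ) (hA : MemLp A p μ) :
    MemLp (fun ξ => Circle.exp (θ ξ) • A ξ) p μ := by
  have h_exp : AEStronglyMeasurable (fun ξ => Circle.exp (θ ξ)) μ :=
    Circle.exp.continuous.comp_aestronglyMeasurable hθ
  exact hA.of_le (h_exp.smul hA.1) (.of_forall fun ξ => (Circle.norm_smul _ _).le)

section Gradient

variable {E : Type*} [NormedAddCommGroup E] [InnerProductSpace ℝ E] [FiniteDimensional ℝ E]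

lemma measurable_gradient [MeasurableSpace E] [BorelSpace E] (φ : E → ℝ) : Measurable (∇ φ) :=
  (InnerProductSpace.toDual ℝ E).symm.continuous.measurable.comp (measurable_fderiv ℝ φ)

lemma tendsto_mul_sub_inner_gradient {φ : E → ℝ} {ξ : E} (hφ : DifferentiableAt ℝ φ ξ) (a : E) :
    Tendsto (fun t => t * (φ (ξ - t⁻¹ • a) - φ ξ)) (cobounded ℝ) (𝓝 (-⟪∇ φ ξ, a⟫)) := by
  have h_lim := hφ.hasFDerivAt.lim (-a) (tendsto_norm_atTop_iff_cobounded.mpr tendsto_id)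
  simpa [← inner_gradient_left, sub_eq_add_neg] using h_lim

end Gradient

section Waves

/-- The Fourier transform, at time `t`, of a wave with dispersion relation `φ` and amplitude `A`.
With this sign the oscillation `exp (i (⟪x, ξ⟫ - t φ(ξ)))` travels with group velocity `∇ φ ξ`. -/
def wave {E F : Type*} [NormedAddCommGroup F] [NormedSpace ℂ F] (φ : E → ℝ) (A : E → F) (t : ℝ)
    (ξ : E) : F :=
  Circle.exp (-(t * φ ξ)) • A ξ

lemma memLp_wave {α F : Type*} [MeasurableSpace α] {μ : Measure α} [NormedAddCommGroup F]
    [NormedSpace ℂ F] {p : ℝ≥0∞} {φ : α → ℝ} {A : α → F} (hφ : AEStronglyMeasurable φ μ)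
    (hA : MemLp A p μ) (t : ℝ) : MemLp (wave φ A t) p μ :=
  memLp_circleExp_smul (hφ.const_smul t).neg hA

variable {E F : Type*} [NormedAddCommGroup E] [InnerProductSpace ℝ E] [FiniteDimensional ℝ E]
  [NormedAddCommGroup F] [NormedSpace ℂ F]

/-- The amplitude `A` multiplied by the character `exp (i ⟪·, a⟫)` of the group velocity `∇ φ`: the
asymptotic effect on a wave of a frequency shift by `t⁻¹ • a`. -/
def velocityModulation (φ : E → ℝ) (a : E) (A : E → F) (ξ : E) : F :=
  Circle.exp ⟪∇ φ ξ, a⟫ • A ξ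

variable {p : ℝ≥0∞} {φ : E → ℝ} {A : E → F}

lemma norm_wave_comp_sub_sub_wave_le (t : ℝ) (a ξ : E) :
    ‖wave φ A t (ξ - t⁻¹ • a) - wave φ (velocityModulation φ a A) t ξ‖
      ≤ ‖A (ξ - t⁻¹ • a) - A ξ‖
        + ‖Circle.exp (-(t * (φ (ξ - t⁻¹ • a) - φ ξ))) • A ξ - velocityModulation φ a A ξ‖ := by
  have h_phase : Circle.exp (-(t * φ (ξ - t⁻¹ • a)))
      = Circle.exp (-(t * φ ξ)) * Circle.exp (-(t * (φ (ξ - t⁻¹ • a) - φ ξ))) := by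
    rw [← Circle.exp_add]
    ring_nf
  have h_split : wave φ A t (ξ - t⁻¹ • a) - wave φ (velocityModulation φ a A) t ξ
      = Circle.exp (-(t * φ (ξ - t⁻¹ • a))) • (A (ξ - t⁻¹ • a) - A ξ) + Circle.exp (-(t * φ ξ)) •
        (Circle.exp (-(t * (φ (ξ - t⁻¹ • a) - φ ξ))) • A ξ - velocityModulation φ a A ξ) := by
    simp only [wave, smul_sub, smul_smul, ← h_phase]
    abel
  rw [h_split]
  exact (norm_add_le _ _).trans_eq (by rw [Circle.norm_smul, Circle.norm_smul])

variable [MeasurableSpace E] [BorelSpace E] {μ : Measure E}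

lemma memLp_velocityModulation (a : E) (hA : MemLp A p μ) :
    MemLp (velocityModulation φ a A) p μ :=
  memLp_circleExp_smul ((measurable_gradient φ).inner measurable_const).aestronglyMeasurable hA

lemma tendsto_eLpNorm_phase_sub_velocityModulation (hp : p ≠ ∞)
    (hφ : Differentiable ℝ φ) (hA : MemLp A p μ) (a : E) :
    Tendsto (fun t => eLpNorm ((fun ξ => Circle.exp (-(t * (φ (ξ - t⁻¹ • a) - φ ξ))) • A ξ)
      - velocityModulation φ a A) p μ) (cobounded ℝ) (𝓝 0) := by
  have h_phase : ∀ t : ℝ, Continuous fun ξ => -(t * (φ (ξ - t⁻¹ • a) - φ ξ)) := fun t => by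
    have := hφ.continuous
    fun_prop
  refine tendsto_eLpNorm_zero_of_dominated hp (fun t => ?_) (hA.norm.const_mul 2)
    (fun t ξ => ?_) fun ξ => ?_
  · exact ((memLp_circleExp_smul (h_phase t).aestronglyMeasurable hA).sub
      (memLp_velocityModulation a hA)).1
  · refine (norm_sub_le _ _).trans_eq ?_
    rw [velocityModulation, Circle.norm_smul, Circle.norm_smul, two_mul]
  · have h_exp := (Circle.exp.continuous.tendsto _).comp
      (tendsto_mul_sub_inner_gradient (hφ ξ) a).neg
    rw [neg_neg] at h_exp
    simpa only [velocityModulation, Function.comp_def, sub_self, Pi.sub_apply] using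
      (h_exp.smul_const (A ξ)).sub_const (velocityModulation φ a A ξ)

theorem tendsto_eLpNorm_wave_comp_sub [μ.IsAddHaarMeasure] [Fact (1 ≤ p)] (hp : p ≠ ∞)
    (hφ : Differentiable ℝ φ) (hA : MemLp A p μ) (a : E) :
    Tendsto (fun t => eLpNorm ((fun ξ => wave φ A t (ξ - t⁻¹ • a))
      - wave φ (velocityModulation φ a A) t) p μ) (cobounded ℝ) (𝓝 0) := by
  have h_translation : Tendsto (fun t : ℝ => eLpNorm ((fun ξ => A (ξ - t⁻¹ • a)) - A) p μ)
      (cobounded ℝ) (𝓝 0) :=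
    (tendsto_eLpNorm_comp_sub_sub_zero hp hA).comp (tendsto_inv_smul_cobounded a)
  have h_phase := tendsto_eLpNorm_phase_sub_velocityModulation hp hφ hA a
  refine tendsto_of_tendsto_of_tendsto_of_le_of_le tendsto_const_nhds
    (by simpa only [add_zero] using h_translation.add h_phase) (fun t => zero_le) fun t => ?_
  have h_meas : AEStronglyMeasurable
      (fun ξ => Circle.exp (-(t * (φ (ξ - t⁻¹ • a) - φ ξ))) • A ξ) μ := by
    have := hφ.continuous
    exact (memLp_circleExp_smul (by fun_prop) hA).1
  calc _ ≤ eLpNorm (fun ξ => ‖A (ξ - t⁻¹ • a) - A ξ‖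
          + ‖Circle.exp (-(t * (φ (ξ - t⁻¹ • a) - φ ξ))) • A ξ - velocityModulation φ a A ξ‖) p μ :=
        eLpNorm_mono_real (norm_wave_comp_sub_sub_wave_le t a)
    _ ≤ _ := eLpNorm_add_le ((memLp_comp_sub hA _).sub hA).1.norm
        (h_meas.sub (memLp_velocityModulation a hA).1).norm Fact.out
    _ = _ := by simp only [eLpNorm_norm]; rfl

end Waves

lemma inner_circle_smul_smul {F : Type*} [NormedAddCommGroup F] [InnerProductSpace ℂ F]
    (c : Circle) (x y : F) : ⟪c • x, c • y⟫_ℂ = ⟪x, y⟫_ℂ := by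
  rw [Circle.smul_def, Circle.smul_def, inner_smul_left, inner_smul_right, ← mul_assoc,
    Complex.conj_mul', Circle.norm_coe, Complex.ofReal_one, one_pow, one_mul]

section Superposition

/-- The Fourier transform, at time `t`, of a finite superposition of waves with dispersion relations
`φ k` and amplitudes `A k`. -/
def superposition {κ E F : Type*} [Fintype κ] [NormedAddCommGroup F] [NormedSpace ℂ F]
    (φ : κ → E → ℝ) (A : κ → E → F) (t : ℝ) : E → F :=
  ∑ k, wave (φ k) (A k) t

lemma memLp_superposition {κ α F : Type*} [Fintype κ] [MeasurableSpace α] {μ : Measure α}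
    [NormedAddCommGroup F] [NormedSpace ℂ F] {p : ℝ≥0∞} {φ : κ → α → ℝ} {A : κ → α → F}
    (hφ : ∀ k, AEStronglyMeasurable (φ k) μ) (hA : ∀ k, MemLp (A k) p μ) (t : ℝ) :
    MemLp (superposition φ A t) p μ :=
  memLp_finsetSum' _ fun k _ => memLp_wave (hφ k) (hA k) t

lemma toReal_eLpNorm_superposition_le {κ α F : Type*} [Fintype κ] [MeasurableSpace α]
    {μ : Measure α} [NormedAddCommGroup F] [NormedSpace ℂ F] {p : ℝ≥0∞} [Fact (1 ≤ p)]
    {φ : κ → α → ℝ} {A : κ → α → F} (hφ : ∀ k, AEStronglyMeasurable (φ k) μ)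
    (hA : ∀ k, MemLp (A k) p μ) (t : ℝ) :
    (eLpNorm (superposition φ A t) p μ).toReal ≤ ∑ k, (eLpNorm (A k) p μ).toReal := by
  have h_wave : ∀ k, eLpNorm (wave (φ k) (A k) t) p μ = eLpNorm (A k) p μ := fun k =>
    eLpNorm_congr_norm_ae (.of_forall fun ξ => Circle.norm_smul _ _)
  rw [← ENNReal.toReal_sum fun k _ => (hA k).eLpNorm_ne_top]
  refine ENNReal.toReal_mono (ENNReal.sum_ne_top.mpr fun k _ => (hA k).eLpNorm_ne_top) ?_
  simp only [← h_wave]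
  exact eLpNorm_sum_le (fun k _ => (memLp_wave (hφ k) (hA k) t).1) Fact.out

variable {κ E F : Type*} [Fintype κ] [NormedAddCommGroup E] [InnerProductSpace ℝ E]
  [FiniteDimensional ℝ E] [NormedAddCommGroup F] [InnerProductSpace ℂ F] {φ : κ → E → ℝ}
  {A : κ → E → F}

lemma inner_velocityModulation (φ : E → ℝ) (a : E) (A : E → F) (ξ : E) :
    ⟪A ξ, velocityModulation φ a A ξ⟫_ℂ
      = Complex.exp (⟪∇ φ ξ, a⟫ * Complex.I) * ‖A ξ‖ ^ 2 := by
  simp only [velocityModulation, Circle.smul_def, Circle.coe_exp, inner_smul_right,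
    inner_self_eq_norm_sq_to_K, Complex.coe_algebraMap]

lemma inner_superposition_velocityModulation {ξ : E} (h : Pairwise fun k l => ⟪A k ξ, A l ξ⟫_ℂ = 0)
    (t : ℝ) (a : E) :
    ⟪superposition φ A t ξ, superposition φ (fun k => velocityModulation (φ k) a (A k)) t ξ⟫_ℂ
      = ∑ k, Complex.exp (⟪∇ (φ k) ξ, a⟫ * Complex.I) * ‖A k ξ‖ ^ 2 := by
  simp only [superposition, Finset.sum_apply, sum_inner, inner_sum]
  refine Finset.sum_congr rfl fun k _ => ?_
  rw [Finset.sum_eq_single k (fun l _ hl => ?_) (by simp), wave, wave, inner_circle_smul_smul,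
    inner_velocityModulation]
  simp only [wave, velocityModulation, Circle.smul_def, inner_smul_left, inner_smul_right,
    h hl, mul_zero]

variable [MeasurableSpace E] [BorelSpace E] {μ : Measure E} [μ.IsAddHaarMeasure]

lemma tendsto_eLpNorm_superposition_comp_sub {p : ℝ≥0∞} [Fact (1 ≤ p)] (hp : p ≠ ∞)
    (hφ : ∀ k, Differentiable ℝ (φ k)) (hA : ∀ k, MemLp (A k) p μ) (a : E) :
    Tendsto (fun t => eLpNorm ((fun ξ => superposition φ A t (ξ - t⁻¹ • a))
      - superposition φ (fun k => velocityModulation (φ k) a (A k)) t) p μ)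
      (cobounded ℝ) (𝓝 0) := by
  have h_wave := tendsto_finsetSum Finset.univ fun k _ =>
    tendsto_eLpNorm_wave_comp_sub hp (hφ k) (hA k) a
  rw [Finset.sum_const_zero] at h_wave
  refine tendsto_of_tendsto_of_tendsto_of_le_of_le tendsto_const_nhds h_wave
    (fun t => zero_le) fun t => ?_
  have h_sum : (fun ξ => superposition φ A t (ξ - t⁻¹ • a))
      - superposition φ (fun k => velocityModulation (φ k) a (A k)) t
      = ∑ k, ((fun ξ => wave (φ k) (A k) t (ξ - t⁻¹ • a))
        - wave (φ k) (velocityModulation (φ k) a (A k)) t) := by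
    ext ξ
    simp only [superposition, Finset.sum_apply, Pi.sub_apply, Finset.sum_sub_distrib]
  have h_meas : ∀ k, AEStronglyMeasurable (φ k) μ := fun k =>
    (hφ k).continuous.aestronglyMeasurable
  rw [h_sum]
  exact eLpNorm_sum_le (fun k _ => ((memLp_comp_sub (memLp_wave (h_meas k) (hA k) t) _).sub
    (memLp_wave (h_meas k) (memLp_velocityModulation a (hA k)) t)).1) Fact.out

theorem tendsto_integral_inner_superposition_comp_sub (hφ : ∀ k, Differentiable ℝ (φ k))
    (hA : ∀ k, MemLp (A k) 2 μ) (h_orth : ∀ ξ, Pairwise fun k l => ⟪A k ξ, A l ξ⟫_ℂ = 0)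
    (a : E) :
    Tendsto (fun t => ∫ ξ, ⟪superposition φ A t ξ, superposition φ A t (ξ - t⁻¹ • a)⟫_ℂ ∂μ)
      (cobounded ℝ)
      (𝓝 (∑ k, ∫ ξ, Complex.exp (⟪∇ (φ k) ξ, a⟫ * Complex.I) * ‖A k ξ‖ ^ 2 ∂μ)) := by
  have h_meas : ∀ k, AEStronglyMeasurable (φ k) μ := fun k =>
    (hφ k).continuous.aestronglyMeasurable
  have h_modulated := fun k => memLp_velocityModulation (φ := φ k) a (hA k)
  have h_diff := tendsto_integral_inner_sub_zero (memLp_superposition h_meas hA)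
    (fun t => memLp_comp_sub (memLp_superposition h_meas hA t) (t⁻¹ • a))
    (memLp_superposition h_meas h_modulated)
    (toReal_eLpNorm_superposition_le h_meas hA)
    (tendsto_eLpNorm_superposition_comp_sub ENNReal.ofNat_ne_top hφ hA a)
  have h_integrable : ∀ k ∈ Finset.univ, Integrable
      (fun ξ => Complex.exp (⟪∇ (φ k) ξ, a⟫ * Complex.I) * ‖A k ξ‖ ^ 2) μ := fun k _ => by
    simpa only [inner_velocityModulation] using
      integrable_inner_of_memLp (hA k) (h_modulated k)
  simp only [inner_superposition_velocityModulation (h_orth _),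
    integral_finsetSum _ h_integrable] at h_diff
  exact tendsto_sub_nhds_zero_iff.mp h_diff

end Superposition

section NormSqMeasure

variable {α F : Type*} [MeasurableSpace α] [NormedAddCommGroup F] {f : α → F} {μ : Measure α}

/-- The measure with density `‖f‖²`: the spatial distribution of the energy of a field `f`. -/
def normSqMeasure (f : α → F) (μ : Measure α) : Measure α := μ.withDensity fun x => ‖f x‖ₑ ^ 2

lemma isFiniteMeasure_normSqMeasure (hf : MemLp f 2 μ) : IsFiniteMeasure (normSqMeasure f μ) := by
  refine isFiniteMeasure_withDensity ?_
  simpa using (lintegral_rpow_enorm_lt_top_of_eLpNorm_lt_top two_ne_zero ENNReal.ofNat_ne_top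
    hf.2).ne

lemma integral_normSqMeasure (hf : AEStronglyMeasurable f μ) (g : α → ℂ) :
    ∫ x, g x ∂(normSqMeasure f μ) = ∫ x, g x * ‖f x‖ ^ 2 ∂μ := by
  rw [normSqMeasure, integral_withDensity_eq_integral_toReal_smul₀ (hf.enorm.pow_const 2)
    (.of_forall fun x => ENNReal.pow_lt_top enorm_lt_top)]
  simp [mul_comm]

lemma measureReal_normSqMeasure (hf : AEStronglyMeasurable f μ) {S : Set α}
    (hS : MeasurableSet S) : (normSqMeasure f μ).real S = ∫ x in S, ‖f x‖ ^ 2 ∂μ := by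
  rw [measureReal_def, normSqMeasure, withDensity_apply _ hS,
    integral_eq_lintegral_of_nonneg_ae (.of_forall fun x => sq_nonneg _)
    (hf.restrict.norm.pow 2)]
  simp [ENNReal.ofReal_pow]

variable {E : Type*} [NormedAddCommGroup E] [InnerProductSpace ℝ E] [MeasurableSpace E]
  [OpensMeasurableSpace E]

lemma charFun_map_normSqMeasure (hf : AEStronglyMeasurable f μ) {T : α → E} (hT : Measurable T)
    (a : E) : charFun ((normSqMeasure f μ).map T) a
      = ∫ x, Complex.exp (⟪T x, a⟫ * Complex.I) * ‖f x‖ ^ 2 ∂μ := by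
  rw [charFun_apply, integral_map hT.aemeasurable, integral_normSqMeasure hf]
  have h_cont : Continuous fun x => Complex.exp (⟪x, a⟫ * Complex.I) := by fun_prop
  exact h_cont.measurable.aestronglyMeasurable

lemma charFun_finsetSum {κ : Type*} (s : Finset κ) (m : κ → Measure E) [∀ k, IsFiniteMeasure (m k)]
    (a : E) : charFun (∑ k ∈ s, m k) a = ∑ k ∈ s, charFun (m k) a := by
  simp only [charFun_apply]
  refine integral_finsetSum_measure fun k _ => ?_
  have h_cont : Continuous fun x : E => Complex.exp (⟪x, a⟫ * Complex.I) := by fun_prop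
  exact .of_bound h_cont.measurable.aestronglyMeasurable 1
    (.of_forall fun x => (Complex.norm_exp_ofReal_mul_I _).le)

end NormSqMeasure

section Dispersion

/-- The distribution of the energy of a superposition of waves over their group velocities: a
wave with dispersion relation `φ k` sends the energy `‖A k ξ‖²` at frequency `ξ` to the velocity
`∇ (φ k) ξ`. -/
def velocityDistribution {κ E F : Type*} [Fintype κ] [NormedAddCommGroup E]
    [InnerProductSpace ℝ E] [CompleteSpace E] [MeasurableSpace E] [NormedAddCommGroup F]
    (φ : κ → E → ℝ) (A : κ → E → F) (μ : Measure E) : Measure E :=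
  ∑ k, (normSqMeasure (A k) μ).map (∇ (φ k))

section VelocityDistribution

variable {κ E F : Type*} [Fintype κ] [NormedAddCommGroup E] [InnerProductSpace ℝ E]
  [FiniteDimensional ℝ E] [MeasurableSpace E] [NormedAddCommGroup F]
  {φ : κ → E → ℝ} {A : κ → E → F} {μ : Measure E}

lemma isFiniteMeasure_velocityDistribution (hA : ∀ k, MemLp (A k) 2 μ) :
    IsFiniteMeasure (velocityDistribution φ A μ) := by
  have h_mass := fun k => isFiniteMeasure_normSqMeasure (hA k)
  unfold velocityDistribution
  infer_instance

variable [BorelSpace E]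

lemma charFun_velocityDistribution (hA : ∀ k, MemLp (A k) 2 μ) (a : E) :
    charFun (velocityDistribution φ A μ) a
      = ∑ k, ∫ ξ, Complex.exp (⟪∇ (φ k) ξ, a⟫ * Complex.I) * ‖A k ξ‖ ^ 2 ∂μ := by
  have h_mass := fun k => isFiniteMeasure_normSqMeasure (hA k)
  rw [velocityDistribution, charFun_finsetSum]
  simp only [charFun_map_normSqMeasure (hA _).1 (measurable_gradient _)]

lemma measureReal_velocityDistribution (hA : ∀ k, MemLp (A k) 2 μ) {S : Set E}
    (hS : MeasurableSet S) : (velocityDistribution φ A μ).real S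
      = ∑ k, ∫ ξ in {ξ | ∇ (φ k) ξ ∈ S}, ‖A k ξ‖ ^ 2 ∂μ := by
  have h_mass := fun k => isFiniteMeasure_normSqMeasure (hA k)
  rw [velocityDistribution, measureReal_def, Measure.finsetSum_apply,
    ENNReal.toReal_sum fun k _ => measure_ne_top _ _]
  refine Finset.sum_congr rfl fun k _ => ?_
  rw [← measureReal_def, map_measureReal_apply (measurable_gradient _) hS,
    measureReal_normSqMeasure (hA k).1 (measurable_gradient _ hS)]
  rfl

lemma velocityDistribution_eq_zero {S : Set E} (hS : MeasurableSet S)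
    (h : ∀ k, ∀ᵐ ξ ∂μ, ∇ (φ k) ξ ∉ S) : velocityDistribution φ A μ S = 0 := by
  rw [velocityDistribution, Measure.finsetSum_apply]
  refine Finset.sum_eq_zero fun k _ => ?_
  rw [Measure.map_apply (measurable_gradient _) hS]
  exact withDensity_absolutelyContinuous _ _ (measure_eq_zero_iff_ae_notMem.mpr (h k))

end VelocityDistribution

variable {d : ℕ} {κ ι : Type*} [Fintype κ] [Fintype ι] {φ : κ → Euc d → ℝ}
  {A : κ → Euc d → EuclideanSpace ℂ ι} {U : ℝ → Euc d → EuclideanSpace ℂ ι}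

theorem tendsto_charFun_map_normSqMeasure (hφ : ∀ k, Differentiable ℝ (φ k))
    (hA : ∀ k, MemLp (A k) 2) (h_orth : ∀ ξ, Pairwise fun k l => ⟪A k ξ, A l ξ⟫_ℂ = 0)
    (hU : ∀ t, MemLp (U t) 2)
    (hU_fourier : ∀ t i,
      IsFourierTransformOf (fun x => U t x i) (fun ξ => superposition φ A t ξ i)) (a : Euc d) :
    Tendsto (fun t : ℝ => charFun ((normSqMeasure (U t) volume).map (t⁻¹ • ·)) a) (cobounded ℝ)
      (𝓝 ((((2 * Real.pi) ^ d)⁻¹ : ℝ) * charFun (velocityDistribution φ A volume) a)) := by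
  rw [charFun_velocityDistribution hA]
  refine ((tendsto_integral_inner_superposition_comp_sub hφ hA h_orth a).const_mul _).congr
    fun t => ?_
  rw [charFun_map_normSqMeasure (hU t).1 (measurable_const_smul _)]
  simp only [real_inner_smul_left, ← real_inner_smul_right]
  exact (IsFourierTransformOf.integral_exp_mul_norm_sq (hU t) (memLp_superposition
    (fun k => (hφ k).continuous.aestronglyMeasurable) hA t) (hU_fourier t) (t⁻¹ • a)).symm

theorem tendsto_setIntegral_norm_sq_of_superposition (hφ : ∀ k, Differentiable ℝ (φ k))
    (hA : ∀ k, MemLp (A k) 2) (h_orth : ∀ ξ, Pairwise fun k l => ⟪A k ξ, A l ξ⟫_ℂ = 0)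
    (hU : ∀ t, MemLp (U t) 2)
    (hU_fourier : ∀ t i,
      IsFourierTransformOf (fun x => U t x i) (fun ξ => superposition φ A t ξ i))
    {S : Set (Euc d)} (hS : MeasurableSet S) (hS_null : ∀ k, ∀ᵐ ξ, ∇ (φ k) ξ ∉ frontier S) :
    Tendsto (fun t : ℝ => ∫ x in {x | t⁻¹ • x ∈ S}, ‖U t x‖ ^ 2) (cobounded ℝ)
      (𝓝 (((2 * Real.pi) ^ d)⁻¹ * ∑ k, ∫ ξ in {ξ | ∇ (φ k) ξ ∈ S}, ‖A k ξ‖ ^ 2)) := by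
  let c : ℝ≥0 := ⟨((2 * Real.pi) ^ d)⁻¹, by positivity⟩
  have h_mass := fun t => isFiniteMeasure_normSqMeasure (hU t)
  have h_mass_velocity := isFiniteMeasure_velocityDistribution (φ := φ) hA
  have h_charFun : ∀ a,
      Tendsto (fun t : ℝ => charFun ((normSqMeasure (U t) volume).map (t⁻¹ • ·)) a)
        (cobounded ℝ) (𝓝 (charFun (c • velocityDistribution φ A volume) a)) := fun a => by
    rw [charFun_nnreal_smul]
    exact tendsto_charFun_map_normSqMeasure hφ hA h_orth hU hU_fourier a
  have h_frontier : (c • velocityDistribution φ A volume) (frontier S) = 0 := by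
    rw [Measure.smul_apply, velocityDistribution_eq_zero isClosed_frontier.measurableSet hS_null,
      smul_zero]
  have h_lim := tendsto_measureReal_of_tendsto_charFun h_charFun h_frontier
  rw [measureReal_nnreal_smul_apply, measureReal_velocityDistribution hA hS] at h_lim
  refine h_lim.congr fun t => ?_
  rw [map_measureReal_apply (measurable_const_smul _) hS,
    measureReal_normSqMeasure (hU t).1 (measurable_const_smul _ hS)]
  rfl

end Dispersion

section KleinGordon

variable {d : ℕ}

lemma jap_pos (ξ : Euc d) : 0 < jap ξ := Real.sqrt_pos.mpr (by positivity)

lemma jap_sq (ξ : Euc d) : jap ξ ^ 2 = 1 + ‖ξ‖ ^ 2 := Real.sq_sqrt (by positivity)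

lemma norm_lt_jap (ξ : Euc d) : ‖ξ‖ < jap ξ :=
  Real.lt_sqrt_of_sq_lt (lt_one_add _)

lemma hasGradientAt_jap (ξ : Euc d) : HasGradientAt jap ((jap ξ)⁻¹ • ξ) ξ := by
  have h_sqrt := ((hasStrictFDerivAt_norm_sq ξ).hasFDerivAt.const_add 1).sqrt
    (by positivity)
  rw [hasGradientAt_iff_hasFDerivAt]
  convert! h_sqrt using 1
  ext η
  simp only [jap, map_smul, smul_apply, InnerProductSpace.toDual_apply_apply,
    innerSL_apply_apply, smul_eq_mul, nsmul_eq_mul]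
  field_simp
  norm_num

/-- The dispersion relations `±⟨ξ⟩` of the Klein–Gordon equation, indexed by the sign. -/
def kgDispersion (σ : ℤˣ) (ξ : Euc d) : ℝ := σ * jap ξ

lemma hasGradientAt_kgDispersion (σ : ℤˣ) (ξ : Euc d) :
    HasGradientAt (kgDispersion σ) (((σ : ℤ) : ℝ) • (jap ξ)⁻¹ • ξ) ξ := by
  simpa only [hasGradientAt_iff_hasFDerivAt, map_smul] using!
    (hasGradientAt_jap ξ).hasFDerivAt.const_mul ((σ : ℤ) : ℝ)

lemma differentiable_kgDispersion (σ : ℤˣ) : Differentiable ℝ (kgDispersion σ : Euc d → ℝ) :=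
  fun ξ => (hasGradientAt_kgDispersion σ ξ).differentiableAt

lemma norm_gradient_kgDispersion (σ : ℤˣ) (ξ : Euc d) :
    ‖∇ (kgDispersion σ) ξ‖ = ‖ξ‖ / jap ξ := by
  rw [(hasGradientAt_kgDispersion σ ξ).gradient, norm_smul, norm_smul, norm_inv,
    Real.norm_of_nonneg (jap_pos ξ).le, Real.norm_eq_abs, ← Int.cast_abs,
    Int.isUnit_iff_abs_eq.mp σ.isUnit, Int.cast_one, one_mul, inv_mul_eq_div]

/-- The vector `(∇w, w, ∂ₜw)`, whose squared norm is the Klein–Gordon energy density. -/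
def energyVector (g : Fin d → ℂ) (w w' : ℂ) : EuclideanSpace ℂ (Fin d ⊕ Fin 2) :=
  WithLp.toLp 2 (Sum.elim g ![w, w'])

lemma norm_energyVector_sq (g : Fin d → ℂ) (w w' : ℂ) :
    ‖energyVector g w w'‖ ^ 2 = ‖w'‖ ^ 2 + ∑ j, ‖g j‖ ^ 2 + ‖w‖ ^ 2 := by
  rw [EuclideanSpace.norm_sq_eq, Fintype.sum_sum_type, Fin.sum_univ_two]
  simp only [energyVector, Sum.elim_inl, Sum.elim_inr, Matrix.cons_val_zero, Matrix.cons_val_one]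
  ring

/-- The direction of the energy vector of the plane wave of sign `σ` and frequency `ξ`, normalised
so that its `∂ₜw` component is unimodular. -/
def kgPolarization (σ : ℤˣ) (ξ : Euc d) : EuclideanSpace ℂ (Fin d ⊕ Fin 2) :=
  energyVector (fun j => Complex.I * ξ j / jap ξ) (jap ξ)⁻¹ (-(σ * Complex.I))

lemma inner_kgPolarization (σ τ : ℤˣ) (ξ : Euc d) :
    ⟪kgPolarization σ ξ, kgPolarization τ ξ⟫_ℂ = 1 + σ * τ := by
  have h_norm : (‖ξ‖ : ℂ) ^ 2 = ∑ j, (ξ j : ℂ) ^ 2 := by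
    exact_mod_cast EuclideanSpace.real_norm_sq_eq ξ
  have h_sum : ∑ j, (ξ j / jap ξ : ℂ) ^ 2 + (jap ξ : ℂ)⁻¹ ^ 2 = 1 := by
    have h_jap : (jap ξ : ℂ) ^ 2 = 1 + (‖ξ‖ : ℂ) ^ 2 := mod_cast jap_sq ξ
    have h_ne : (jap ξ : ℂ) ≠ 0 := mod_cast (jap_pos ξ).ne'
    simp only [div_pow, ← Finset.sum_div, ← h_norm]
    field_simp
    rw [h_jap, add_comm]
  have h_term (j : Fin d) : Complex.I * ξ j / jap ξ * (-Complex.I * ξ j / jap ξ)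
      = (ξ j / jap ξ : ℂ) ^ 2 := by
    linear_combination -(ξ j / jap ξ : ℂ) ^ 2 * Complex.I_sq
  rw [PiLp.inner_apply, Fintype.sum_sum_type, Fin.sum_univ_two]
  simp only [kgPolarization, energyVector, RCLike.inner_apply, Sum.elim_inl, Sum.elim_inr,
    Matrix.cons_val_zero, Matrix.cons_val_one, map_div₀, map_mul, map_neg, map_inv₀, map_intCast,
    Complex.conj_I, Complex.conj_ofReal, h_term]
  linear_combination h_sum - σ * τ * Complex.I_sq

lemma norm_kgPolarization (σ : ℤˣ) (ξ : Euc d) : ‖kgPolarization σ ξ‖ = √2 := by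
  have h_inner : ⟪kgPolarization σ ξ, kgPolarization σ ξ⟫_ℂ = 2 := by
    rw [inner_kgPolarization]
    norm_cast
    simp
  rw [norm_eq_sqrt_re_inner (𝕜 := ℂ), h_inner]
  simp

lemma continuous_kgPolarization (σ : ℤˣ) : Continuous (kgPolarization σ : Euc d → _) := by
  have h_jap : Continuous (jap : Euc d → ℝ) := by unfold jap; fun_prop
  have h_ne : ∀ ξ : Euc d, (jap ξ : ℂ) ≠ 0 := fun ξ => mod_cast (jap_pos ξ).ne'
  refine (PiLp.continuous_toLp 2 _).comp (continuous_pi ?_)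
  rintro (j | i)
  · simp only [Sum.elim_inl]
    fun_prop (disch := simpa using h_ne)
  · fin_cases i
    · exact (Complex.continuous_ofReal.comp h_jap).inv₀ h_ne
    · exact continuous_const

/-- The amplitude of the part of the Klein–Gordon solution with data `v₀`, `v₁` (on the Fourier
side) that oscillates with sign `σ`. -/
def kgAmplitude (v₀ v₁ : Euc d → ℂ) (σ : ℤˣ) (ξ : Euc d) : EuclideanSpace ℂ (Fin d ⊕ Fin 2) :=
  ((jap ξ * v₀ ξ + σ * Complex.I * v₁ ξ) / 2) • kgPolarization σ ξ

variable {v₀ v₁ : Euc d → ℂ}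

lemma pairwise_inner_kgAmplitude_eq_zero (ξ : Euc d) :
    Pairwise fun σ τ => ⟪kgAmplitude v₀ v₁ σ ξ, kgAmplitude v₀ v₁ τ ξ⟫_ℂ = 0 := by
  intro σ τ hστ
  rw [Int.units_ne_iff_eq_neg] at hστ
  rw [kgAmplitude, kgAmplitude, inner_smul_left, inner_smul_right, inner_kgPolarization, hστ]
  have h_sign : (1 + ((-τ : ℤˣ) : ℤ) * (τ : ℤ) : ℂ) = 0 := by
    norm_cast
    simp
  rw [h_sign, mul_zero, mul_zero]

lemma sum_norm_kgAmplitude_sq (ξ : Euc d) :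
    ∑ σ, ‖kgAmplitude v₀ v₁ σ ξ‖ ^ 2 = (1 + ‖ξ‖ ^ 2) * ‖v₀ ξ‖ ^ 2 + ‖v₁ ξ‖ ^ 2 := by
  have h_two : √2 ^ 2 = (2 : ℝ) := Real.sq_sqrt zero_le_two
  have h_parallelogram := parallelogram_law_with_norm ℂ (jap ξ * v₀ ξ) (Complex.I * v₁ ξ)
  simp only [kgAmplitude, norm_smul, mul_pow, norm_kgPolarization, UnitsInt.univ]
  rw [Finset.sum_pair (by decide)]
  simp only [norm_mul, norm_div, Complex.norm_I, one_mul, Complex.norm_real, Complex.norm_ofNat,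
    Real.norm_eq_abs, mul_pow, sq_abs, h_two, Units.val_one, Units.val_neg, Int.cast_one,
    Int.cast_neg, neg_mul, ← sub_eq_add_neg, ← jap_sq] at h_parallelogram ⊢
  linear_combination h_parallelogram / 2

lemma superposition_kgAmplitude (t : ℝ) (ξ : Euc d) :
    superposition kgDispersion (kgAmplitude v₀ v₁) t ξ
      = energyVector (fun j => Complex.I * ξ j * vW v₀ v₁ t ξ) (vW v₀ v₁ t ξ)
        (vDt v₀ v₁ t ξ) := by
  have h_ne : (jap ξ : ℂ) ≠ 0 := mod_cast (jap_pos ξ).ne'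
  have h_pos : (Circle.exp (-(t * kgDispersion 1 ξ)) : ℂ)
      = Real.cos (t * jap ξ) - Real.sin (t * jap ξ) * Complex.I := by
    rw [Circle.coe_exp, Complex.exp_mul_I]
    simp [kgDispersion, sub_eq_add_neg]
  have h_neg : (Circle.exp (-(t * kgDispersion (-1) ξ)) : ℂ)
      = Real.cos (t * jap ξ) + Real.sin (t * jap ξ) * Complex.I := by
    simp [kgDispersion, Circle.coe_exp, Complex.exp_mul_I]
  ext i
  rw [superposition, UnitsInt.univ, Finset.sum_pair (by decide), Pi.add_apply, PiLp.add_apply]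
  simp only [wave, PiLp.smul_apply, Circle.smul_def, h_pos, h_neg, kgAmplitude, kgPolarization,
    energyVector, vW, vDt, smul_eq_mul, Units.val_one, Units.val_neg, Int.cast_one, Int.cast_neg]
  set c := (Real.cos (t * jap ξ) : ℂ)
  set s := Real.sin (t * jap ξ)
  rcases i with j | i
  · simp only [Sum.elim_inl]
    push_cast
    field_simp
    linear_combination -(2 * ξ j * s * v₁ ξ) * Complex.I_sq
  · fin_cases i
    · simp only [Fin.zero_eta, Sum.elim_inr, Matrix.cons_val_zero]
      push_cast
      field_simp
      linear_combination -(2 * s * v₁ ξ) * Complex.I_sq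
    · simp only [Fin.mk_one, Sum.elim_inr, Matrix.cons_val_one]
      push_cast
      linear_combination (s * jap ξ * v₀ ξ - c * v₁ ξ) * Complex.I_sq

lemma memLp_kgAmplitude (h₀ : MemLp (fun ξ => (jap ξ : ℂ) * v₀ ξ) 2) (h₁ : MemLp v₁ 2) (σ : ℤˣ) :
    MemLp (kgAmplitude v₀ v₁ σ) 2 := by
  have h_coeff : MemLp (fun ξ => (jap ξ * v₀ ξ + σ * Complex.I * v₁ ξ) / 2) 2 := by
    simpa only [div_eq_inv_mul] using! (h₀.add (h₁.const_mul _)).const_mul _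
  refine h_coeff.of_le_mul (c := √2)
    (h_coeff.1.smul (continuous_kgPolarization σ).aestronglyMeasurable) (.of_forall fun ξ => ?_)
  rw [kgAmplitude, norm_smul, mul_comm, norm_kgPolarization]

end KleinGordon

section Annulus

variable {d : ℕ} {r₀ r₁ : ℝ≥0∞}

/-- The open annulus of velocities with speed between `r₀` and `r₁`. -/
def velocityAnnulus (d : ℕ) (r₀ r₁ : ℝ≥0∞) : Set (Euc d) :=
  {v | r₀ < ENNReal.ofReal ‖v‖ ∧ ENNReal.ofReal ‖v‖ < r₁}

lemma measurableSet_velocityAnnulus : MeasurableSet (velocityAnnulus d r₀ r₁) :=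
  measurableSet_Ioo.preimage measurable_norm.ennreal_ofReal

lemma ofReal_norm_of_mem_frontier_velocityAnnulus {v : Euc d}
    (hv : v ∈ frontier (velocityAnnulus d r₀ r₁)) :
    ENNReal.ofReal ‖v‖ = r₀ ∨ ENNReal.ofReal ‖v‖ = r₁ := by
  have h_cont : Continuous fun v : Euc d => ENNReal.ofReal ‖v‖ :=
    ENNReal.continuous_ofReal.comp continuous_norm
  have h_mem : ENNReal.ofReal ‖v‖ ∈ frontier (Set.Ioo r₀ r₁) :=
    h_cont.frontier_preimage_subset _ hv
  rw [isOpen_Ioo.frontier_eq] at h_mem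
  obtain ⟨h_left, h_right⟩ := closure_minimal Set.Ioo_subset_Icc_self isClosed_Icc h_mem.1
  by_contra! h_ne
  exact h_mem.2 ⟨h_left.lt_of_ne h_ne.1.symm, h_right.lt_of_ne h_ne.2⟩

lemma ae_norm_div_jap_ne [Nonempty (Fin d)] (c : ℝ) : ∀ᵐ ξ : Euc d, ‖ξ‖ / jap ξ ≠ c := by
  refine measure_mono_null (fun ξ hξ => ?_)
    (Measure.addHaar_sphere volume (0 : Euc d) (√(c ^ 2 / (1 - c ^ 2))))
  obtain rfl : ‖ξ‖ / jap ξ = c := not_not.mp hξ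
  have h_one_add : 0 < 1 + ‖ξ‖ ^ 2 := by positivity
  have h_sub : 1 - ‖ξ‖ ^ 2 / (1 + ‖ξ‖ ^ 2) = (1 + ‖ξ‖ ^ 2)⁻¹ := by
    field_simp
    ring
  rw [mem_sphere_zero_iff_norm, div_pow, jap_sq, h_sub, div_inv_eq_mul,
    div_mul_cancel₀ _ h_one_add.ne', Real.sqrt_sq (norm_nonneg ξ)]

lemma ae_gradient_kgDispersion_notMem_frontier [Nonempty (Fin d)] (σ : ℤˣ) :
    ∀ᵐ ξ : Euc d, ∇ (kgDispersion σ) ξ ∉ frontier (velocityAnnulus d r₀ r₁) := by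
  filter_upwards [ae_norm_div_jap_ne r₀.toReal, ae_norm_div_jap_ne r₁.toReal] with ξ h₀ h₁ h_mem
  rw [← norm_gradient_kgDispersion σ] at h₀ h₁
  rcases ofReal_norm_of_mem_frontier_velocityAnnulus h_mem with h | h
  · exact h₀ (by rw [← h, ENNReal.toReal_ofReal (norm_nonneg _)])
  · exact h₁ (by rw [← h, ENNReal.toReal_ofReal (norm_nonneg _)])

end Annulus

section Energy

variable {d : ℕ} {r₀ r₁ : ℝ≥0∞} {v₀ v₁ : Euc d → ℂ} {w w' : ℝ → Euc d → ℂ}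
  {g : ℝ → Fin d → Euc d → ℂ}

lemma memLp_energyVector {α : Type*} [MeasurableSpace α] {μ : Measure α} {p : ℝ≥0∞}
    {g : Fin d → α → ℂ} {w w' : α → ℂ} (hg : ∀ j, MemLp (g j) p μ) (hw : MemLp w p μ)
    (hw' : MemLp w' p μ) :
    MemLp (fun x => energyVector (fun j => g j x) (w x) (w' x)) p μ := by
  refine MemLp.of_eval_piLp ?_
  rintro (j | i)
  · exact hg j
  · fin_cases i
    exacts [hw, hw']

lemma isFourierTransformOf_energyVector {t : ℝ} {g : Fin d → Euc d → ℂ} {w w' : Euc d → ℂ}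
    (hg : ∀ j, IsFourierTransformOf (g j) (fun ξ => Complex.I * ξ j * vW v₀ v₁ t ξ))
    (hw : IsFourierTransformOf w (vW v₀ v₁ t)) (hw' : IsFourierTransformOf w' (vDt v₀ v₁ t))
    (i : Fin d ⊕ Fin 2) :
    IsFourierTransformOf (fun x => energyVector (fun j => g j x) (w x) (w' x) i)
      (fun ξ => superposition kgDispersion (kgAmplitude v₀ v₁) t ξ i) := by
  simp only [superposition_kgAmplitude]
  rcases i with j | i
  · exact hg j
  · fin_cases i
    exacts [hw, hw']

lemma localEnergy_eq_setIntegral_norm_energyVector_sq (t : ℝ) :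
    localEnergy w w' g r₀ r₁ t
      = ∫ x in {x | t⁻¹ • x ∈ velocityAnnulus d r₀ r₁},
          ‖energyVector (fun j => g t j x) (w t x) (w' t x)‖ ^ 2 := by
  simp only [localEnergy, velocityAnnulus, norm_energyVector_sq, norm_smul, norm_inv,
    Real.norm_eq_abs, inv_mul_eq_div, Set.mem_ofPred_eq]

lemma sum_setIntegral_norm_kgAmplitude_sq (h₀ : MemLp (fun ξ => (jap ξ : ℂ) * v₀ ξ) 2)
    (h₁ : MemLp v₁ 2) :
    ∑ σ, ∫ ξ in {ξ | ∇ (kgDispersion σ) ξ ∈ velocityAnnulus d r₀ r₁},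
        ‖kgAmplitude v₀ v₁ σ ξ‖ ^ 2
      = ∫ ξ in {ξ | r₀ < ENNReal.ofReal (‖ξ‖ / jap ξ) ∧ ENNReal.ofReal (‖ξ‖ / jap ξ) < r₁},
          ((1 + ‖ξ‖ ^ 2) * ‖v₀ ξ‖ ^ 2 + ‖v₁ ξ‖ ^ 2) := by
  have h_int (σ : ℤˣ) : Integrable fun ξ => ‖kgAmplitude v₀ v₁ σ ξ‖ ^ 2 :=
    (memLp_kgAmplitude h₀ h₁ σ).norm.integrable_sq
  simp only [velocityAnnulus, Set.mem_ofPred_eq, norm_gradient_kgDispersion]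
  rw [← integral_finsetSum _ fun σ _ => (h_int σ).integrableOn]
  simp only [sum_norm_kgAmplitude_sq]

lemma tendsto_localEnergy [Nonempty (Fin d)] (h₀ : MemLp (fun ξ => (jap ξ : ℂ) * v₀ ξ) 2)
    (h₁ : MemLp v₁ 2) (hw : ∀ t, MemLp (w t) 2 ∧ IsFourierTransformOf (w t) (vW v₀ v₁ t))
    (hw' : ∀ t, MemLp (w' t) 2 ∧ IsFourierTransformOf (w' t) (vDt v₀ v₁ t))
    (hg : ∀ t j, MemLp (g t j) 2 ∧
      IsFourierTransformOf (g t j) (fun ξ => Complex.I * ξ j * vW v₀ v₁ t ξ)) :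
    Tendsto (localEnergy w w' g r₀ r₁) (cobounded ℝ)
      (𝓝 (((2 * Real.pi) ^ d)⁻¹ *
        ∫ ξ in {ξ | r₀ < ENNReal.ofReal (‖ξ‖ / jap ξ) ∧ ENNReal.ofReal (‖ξ‖ / jap ξ) < r₁},
          ((1 + ‖ξ‖ ^ 2) * ‖v₀ ξ‖ ^ 2 + ‖v₁ ξ‖ ^ 2))) := by
  rw [← sum_setIntegral_norm_kgAmplitude_sq h₀ h₁,
    funext localEnergy_eq_setIntegral_norm_energyVector_sq]
  exact tendsto_setIntegral_norm_sq_of_superposition differentiable_kgDispersion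
    (memLp_kgAmplitude h₀ h₁) pairwise_inner_kgAmplitude_eq_zero
    (fun t => memLp_energyVector (fun j => (hg t j).1) (hw t).1 (hw' t).1)
    (fun t => isFourierTransformOf_energyVector (fun j => (hg t j).2) (hw t).2 (hw' t).2)
    measurableSet_velocityAnnulus ae_gradient_kgDispersion_notMem_frontier

lemma localEnergy_one_top {t : ℝ} (ht : t ≠ 0) :
    localEnergy w w' g 1 ⊤ t
      = ∫ x in {x | |t| < ‖x‖}, (‖w' t x‖ ^ 2 + (∑ j, ‖g t j x‖ ^ 2) + ‖w t x‖ ^ 2) := by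
  simp only [localEnergy, ENNReal.ofReal_lt_top, and_true, ENNReal.one_lt_ofReal,
    one_lt_div (abs_pos.mpr ht)]

lemma ofReal_norm_div_jap_le_one (ξ : Euc d) : ENNReal.ofReal (‖ξ‖ / jap ξ) ≤ 1 :=
  ENNReal.ofReal_le_one.mpr ((div_le_one (jap_pos ξ)).mpr (norm_lt_jap ξ).le)

end Energy

theorem statement18_general (d : ℕ) (hd : 1 ≤ d) (v₀ v₁ : Euc d → ℂ)
    (h₀ : MemLp (fun ξ => (jap ξ : ℂ) * v₀ ξ) 2) (h₁ : MemLp v₁ 2)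
    (w w' : ℝ → Euc d → ℂ) (g : ℝ → Fin d → Euc d → ℂ)
    (hw : ∀ t, MemLp (w t) 2 ∧ IsFourierTransformOf (w t) (vW v₀ v₁ t))
    (hw' : ∀ t, MemLp (w' t) 2 ∧ IsFourierTransformOf (w' t) (vDt v₀ v₁ t))
    (hg : ∀ t j, MemLp (g t j) 2 ∧
      IsFourierTransformOf (g t j) (fun ξ => Complex.I * ξ j * vW v₀ v₁ t ξ))
    (r₀ r₁ : ℝ≥0∞) :
    Tendsto (localEnergy w w' g r₀ r₁) (cobounded ℝ)
      (𝓝 (((2 * Real.pi) ^ d)⁻¹ *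
        ∫ ξ in {ξ | r₀ < ENNReal.ofReal (‖ξ‖ / jap ξ) ∧ ENNReal.ofReal (‖ξ‖ / jap ξ) < r₁},
          ((1 + ‖ξ‖ ^ 2) * ‖v₀ ξ‖ ^ 2 + ‖v₁ ξ‖ ^ 2))) ∧
    Tendsto
      (fun t => ∫ x in {x | |t| < ‖x‖}, (‖w' t x‖ ^ 2 + (∑ j, ‖g t j x‖ ^ 2) + ‖w t x‖ ^ 2))
      (cobounded ℝ) (𝓝 0) := by
  have : Nonempty (Fin d) := ⟨⟨0, hd⟩⟩
  refine ⟨tendsto_localEnergy h₀ h₁ hw hw' hg, ?_⟩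
  have h_cone := tendsto_localEnergy (r₀ := 1) (r₁ := ⊤) h₀ h₁ hw hw' hg
  simp only [(ofReal_norm_div_jap_le_one _).not_gt, false_and, Set.ofPred_false,
    setIntegral_empty, mul_zero] at h_cone
  exact h_cone.congr' ((eventually_ne_cobounded 0).mono fun t ht => localEnergy_one_top ht)

/-- classical partition of energy for Klein–Gordon, eq. (1.15):
for real data `w₀ ∈ H¹`, `w₁ ∈ L²` and all `0 ≤ r₀ ≤ r₁ ≤ ∞`, the energy of the solution in
the annulus `{r₀ < |x|/|t| < r₁}` converges, as `t → ±∞`, to the frequency-localized energy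
`(2π)^{-d} ∫_{r₀ < |ξ|/⟨ξ⟩ < r₁} (⟨ξ⟩²|ŵ₀|² + |ŵ₁|²) dξ`.  In particular the energy outside
the light cone `{|x| > |t|}` tends to zero. -/
theorem statement18
    (d : ℕ) (hd : 1 ≤ d)
    (w₀ w₁ : Euc d → ℝ) (v₀ v₁ : Euc d → ℂ)
    (hw₀L2 : MemLp (fun x => ((w₀ x : ℝ) : ℂ)) 2 (volume : Measure (Euc d)))
    (hw₁L2 : MemLp (fun x => ((w₁ x : ℝ) : ℂ)) 2 (volume : Measure (Euc d)))
    (hv₀ : IsFourierTransformOf (fun x => ((w₀ x : ℝ) : ℂ)) v₀)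
    (hv₁ : IsFourierTransformOf (fun x => ((w₁ x : ℝ) : ℂ)) v₁)
    (hH1 : MemLp (fun ξ => ((jap ξ : ℝ) : ℂ) * v₀ ξ) 2 (volume : Measure (Euc d)))
    (hv₁L2 : MemLp v₁ 2 (volume : Measure (Euc d)))
    -- the solution `w`, its time derivative and its space derivatives, described by
    -- `L²` representatives together with their Fourier transforms
    (wfun dtw : ℝ → Euc d → ℂ) (djw : ℝ → Fin d → Euc d → ℂ)
    (hwfun : ∀ t : ℝ, MemLp (wfun t) 2 (volume : Measure (Euc d)) ∧
      IsFourierTransformOf (wfun t) (vW v₀ v₁ t))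
    (hdtw : ∀ t : ℝ, MemLp (dtw t) 2 (volume : Measure (Euc d)) ∧
      IsFourierTransformOf (dtw t) (vDt v₀ v₁ t))
    (hdjw : ∀ t : ℝ, ∀ j : Fin d, MemLp (djw t j) 2 (volume : Measure (Euc d)) ∧
      IsFourierTransformOf (djw t j)
        (fun ξ => Complex.I * ((ξ j : ℝ) : ℂ) * vW v₀ v₁ t ξ))
    (r₀ r₁ : ℝ≥0∞) (hr : r₀ ≤ r₁) :
    (Tendsto (fun t : ℝ => localEnergy wfun dtw djw r₀ r₁ t) atTop
      (𝓝 ((((2 * Real.pi) ^ d : ℝ))⁻¹ *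
        ∫ ξ in {ξ : Euc d | r₀ < ENNReal.ofReal (‖ξ‖ / jap ξ) ∧
            ENNReal.ofReal (‖ξ‖ / jap ξ) < r₁},
          ((1 + ‖ξ‖ ^ 2) * ‖v₀ ξ‖ ^ 2 + ‖v₁ ξ‖ ^ 2))) ∧
     Tendsto (fun t : ℝ => localEnergy wfun dtw djw r₀ r₁ t) atBot
      (𝓝 ((((2 * Real.pi) ^ d : ℝ))⁻¹ *
        ∫ ξ in {ξ : Euc d | r₀ < ENNReal.ofReal (‖ξ‖ / jap ξ) ∧
            ENNReal.ofReal (‖ξ‖ / jap ξ) < r₁},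
          ((1 + ‖ξ‖ ^ 2) * ‖v₀ ξ‖ ^ 2 + ‖v₁ ξ‖ ^ 2)))) ∧
    (Tendsto (fun t : ℝ =>
        ∫ x in {x : Euc d | |t| < ‖x‖},
          (‖dtw t x‖ ^ 2 + (∑ j : Fin d, ‖djw t j x‖ ^ 2) + ‖wfun t x‖ ^ 2)) atTop
      (𝓝 0) ∧
     Tendsto (fun t : ℝ =>
        ∫ x in {x : Euc d | |t| < ‖x‖},
          (‖dtw t x‖ ^ 2 + (∑ j : Fin d, ‖djw t j x‖ ^ 2) + ‖wfun t x‖ ^ 2)) atBot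
      (𝓝 0)) := by
  have h := statement18_general d hd v₀ v₁ hH1 hv₁L2 wfun dtw djw hwfun hdtw hdjw r₀ r₁
  exact ⟨⟨h.1.mono_left IsOrderBornology.atTop_le_cobounded,
      h.1.mono_left IsOrderBornology.atBot_le_cobounded⟩,
    h.2.mono_left IsOrderBornology.atTop_le_cobounded,
    h.2.mono_left IsOrderBornology.atBot_le_cobounded⟩
end
end
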